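/- Let M be an even nondegenerate lattice of signature (t₊, t₋) and let L be an even unimodular lattice of signature (l₊, l₋). If l₊ − t₊ > 0, l₋ − t₋ > 0, and l₊ + l₋ − 2t₊ − 2t₋ ≥ 2, then there exists a primitive embedding of M into L. -/

import Mathlib

open Matrix

/-- The number of positive eigenvalues of an integer matrix, viewed as a real
symmetric matrix (0 if the real matrix is not Hermitian). -/
noncomputable def sigPlus {n : ℕ} (G : Matrix (Fin n) (Fin n) ℤ) : ℕ :=
  if h : (G.map ((↑·) : ℤ → ℝ)).IsHermitian then
    Nat.card {i : Fin n // 0 < h.eigenvalues i}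
  else 0

/-- The number of negative eigenvalues of an integer matrix, viewed as a real
symmetric matrix (0 if the real matrix is not Hermitian). -/
noncomputable def sigMinus {n : ℕ} (G : Matrix (Fin n) (Fin n) ℤ) : ℕ :=
  if h : (G.map ((↑·) : ℤ → ℝ)).IsHermitian then
    Nat.card {i : Fin n // h.eigenvalues i < 0}
  else 0

/-- An embedding of the lattice `(ℤ^m, M)` into the lattice `(ℤ^n, G)`:
an injective ℤ-linear map respecting the bilinear forms. -/
def IsLatticeEmbedding {m n : ℕ} (M : Matrix (Fin m) (Fin m) ℤ)
    (G : Matrix (Fin n) (Fin n) ℤ) (T : Matrix (Fin n) (Fin m) ℤ) : Prop :=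
  Function.Injective T.mulVec ∧
    ∀ x y : Fin m → ℤ, T.mulVec x ⬝ᵥ G.mulVec (T.mulVec y) = x ⬝ᵥ M.mulVec y

/-- A primitive embedding: an embedding whose cokernel `ℤ^n / T(ℤ^m)` is
torsion-free, i.e. if a nonzero multiple of `v` lies in the image then so does `v`. -/
def IsPrimitiveLatticeEmbedding {m n : ℕ} (M : Matrix (Fin m) (Fin m) ℤ)
    (G : Matrix (Fin n) (Fin n) ℤ) (T : Matrix (Fin n) (Fin m) ℤ) : Prop :=
  IsLatticeEmbedding M G T ∧
    ∀ (v : Fin n → ℤ) (k : ℤ), k ≠ 0 → (∃ x, T.mulVec x = k • v) → ∃ x, T.mulVec x = v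

/-!
Over `ℚ` an even unimodular lattice of signature `(l₊, l₋)` is isometric to the orthogonal sum of
`l₊` forms `x ^ 2` and `l₋` forms `-x ^ 2`, by Milnor's computation of the Witt group of `ℚ` one
prime at a time, and `8 ∣ l₊ - l₋` by van der Blij's lemma. After a change of sign
`l₊ = l₋ + 8k`.

Add copies of `⟨2⟩` to `M` until its rank is `l₋ + 4k - 1`. For every even `F`, the even lattice
with Gram matrix `[[M, 1], [1, F]]` contains `M` together with vectors dual to a basis of `M`, so
every embedding of it restricts to a primitive embedding of `M`. If `M` is diagonalised over `ℚ` as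
`⟨g₁, …, gᵣ⟩`, choose `4k` of the positive `gᵢ`; in the diagonalising coordinates `F` is
`(c + 1) / gᵢ` at these places and `0` at the others, where `c` is such that
`gᵢ s ^ 2 = c + r ^ 2` is solvable for all the chosen `gᵢ`. Minus the norm of `t + ∑ √gᵢ` is such a
`c`. With this choice the lattice plus a hyperbolic plane is rationally isometric to `L`. It then
lies in an even unimodular lattice of the same isotropic quadratic space, and any two of those are
isometric, by passing from one to the other through neighbours.
-/

/-! ### Diagonal forms up to congruence -/

section Congruence

variable {R : Type*} [CommRing R] {ι κ ν ξ : Type*} [Fintype ι] [Fintype κ] [Fintype ν] [Fintype ξ]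
  [DecidableEq ι] [DecidableEq κ] [DecidableEq ν] [DecidableEq ξ]

/-- Two square matrices are congruent if they are Gram matrices of isometric bilinear forms. The
index types may differ, so that reindexing is a congruence. -/
def IsCongruent (A : Matrix ι ι R) (B : Matrix κ κ R) : Prop :=
  ∃ (P : Matrix ι κ R) (Q : Matrix κ ι R), P * Q = 1 ∧ Q * P = 1 ∧ Pᵀ * A * P = B

namespace IsCongruent

theorem of_transpose_mul_mul {A B P : Matrix ι ι R} (hP : IsUnit P.det) (h : Pᵀ * A * P = B) :
    IsCongruent A B :=
  ⟨P, P⁻¹, mul_nonsing_inv P hP, nonsing_inv_mul P hP, h⟩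

theorem refl (A : Matrix ι ι R) : IsCongruent A A :=
  ⟨1, 1, by simp⟩

theorem symm {A : Matrix ι ι R} {B : Matrix κ κ R} (h : IsCongruent A B) : IsCongruent B A := by
  obtain ⟨P, Q, hPQ, hQP, rfl⟩ := h
  refine ⟨Q, P, hQP, hPQ, ?_⟩
  have hQP' : Qᵀ * Pᵀ = 1 := by rw [← transpose_mul, hPQ, transpose_one]
  calc Qᵀ * (Pᵀ * A * P) * Q = (Qᵀ * Pᵀ) * A * (P * Q) := by simp only [Matrix.mul_assoc]
    _ = A := by rw [hQP', hPQ, Matrix.one_mul, Matrix.mul_one]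

theorem trans {A : Matrix ι ι R} {B : Matrix κ κ R} {C : Matrix ν ν R} (h : IsCongruent A B)
    (h' : IsCongruent B C) : IsCongruent A C := by
  obtain ⟨P, Q, hPQ, hQP, rfl⟩ := h
  obtain ⟨P', Q', hPQ', hQP', rfl⟩ := h'
  refine ⟨P * P', Q' * Q, ?_, ?_, by simp only [transpose_mul, Matrix.mul_assoc]⟩
  · rw [Matrix.mul_assoc, ← Matrix.mul_assoc P', hPQ', Matrix.one_mul, hPQ]
  · rw [Matrix.mul_assoc, ← Matrix.mul_assoc Q, hQP, Matrix.one_mul, hQP']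

theorem submatrix_equiv (A : Matrix ι ι R) (e : κ ≃ ι) : IsCongruent A (A.submatrix e e) := by
  refine ⟨(1 : Matrix ι ι R).submatrix id e, (1 : Matrix ι ι R).submatrix e id, ?_, ?_, ?_⟩
  · rw [submatrix_mul_equiv, Matrix.one_mul, submatrix_id_id]
  · rw [← submatrix_mul _ _ _ _ _ Function.bijective_id, Matrix.one_mul, submatrix_one_equiv]
  · ext i j
    simp [Matrix.mul_apply, one_apply]

theorem neg {A : Matrix ι ι R} {B : Matrix κ κ R} (h : IsCongruent A B) :
    IsCongruent (-A) (-B) := by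
  obtain ⟨P, Q, hPQ, hQP, rfl⟩ := h
  exact ⟨P, Q, hPQ, hQP, by simp⟩

theorem fromBlocks {A : Matrix ι ι R} {B : Matrix κ κ R} {C : Matrix ν ν R} {D : Matrix ξ ξ R}
    (h : IsCongruent A B) (h' : IsCongruent C D) :
    IsCongruent (fromBlocks A 0 0 C) (fromBlocks B 0 0 D) := by
  obtain ⟨P, Q, hPQ, hQP, rfl⟩ := h
  obtain ⟨P', Q', hPQ', hQP', rfl⟩ := h'
  refine ⟨Matrix.fromBlocks P 0 0 P', Matrix.fromBlocks Q 0 0 Q', ?_, ?_, ?_⟩ <;>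
    simp [fromBlocks_multiply, fromBlocks_transpose, hPQ, hPQ', hQP, hQP', fromBlocks_one]

theorem card_eq [Nontrivial R] {A : Matrix ι ι R} {B : Matrix κ κ R} (h : IsCongruent A B) :
    Fintype.card ι = Fintype.card κ := by
  obtain ⟨P, Q, hPQ, hQP, -⟩ := h
  exact Matrix.square_of_invertible P Q hPQ hQP

theorem map {S : Type*} [CommRing S] (f : R →+* S) {A : Matrix ι ι R} {B : Matrix κ κ R}
    (h : IsCongruent A B) : IsCongruent (A.map f) (B.map f) := by
  obtain ⟨P, Q, hPQ, hQP, rfl⟩ := h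
  exact ⟨P.map f, Q.map f, by rw [← Matrix.map_mul, hPQ, Matrix.map_one _ f.map_zero f.map_one],
    by rw [← Matrix.map_mul, hQP, Matrix.map_one _ f.map_zero f.map_one],
    by simp only [Matrix.map_mul, transpose_map]⟩

theorem det_dvd_det {A : Matrix ι ι R} {B : Matrix κ κ R} (h : IsCongruent A B) :
    A.det ∣ B.det := by
  obtain ⟨P, Q, hPQ, hQP, rfl⟩ := h
  have hQP' : Pᵀ * Qᵀ = 1 := by rw [← transpose_mul, hQP, transpose_one]
  have hPQ' : Qᵀ * Pᵀ = 1 := by rw [← transpose_mul, hPQ, transpose_one]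
  rw [Matrix.mul_assoc, det_comm' hQP' hPQ', Matrix.mul_assoc, det_mul]
  exact dvd_mul_right _ _

theorem det_ne_zero {A : Matrix ι ι R} {B : Matrix κ κ R} (h : IsCongruent A B)
    (hA : A.det ≠ 0) : B.det ≠ 0 :=
  ne_zero_of_dvd_ne_zero hA h.symm.det_dvd_det

end IsCongruent

theorem isCongruent_toMatrix {V : Type*} [AddCommGroup V] [Module R V] (b : Module.Basis ι R V)
    (c : Module.Basis κ R V) (B : LinearMap.BilinForm R V) :
    IsCongruent (LinearMap.BilinForm.toMatrix b B) (LinearMap.BilinForm.toMatrix c B) :=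
  ⟨b.toMatrix c, c.toMatrix b, b.toMatrix_mul_toMatrix_flip c, c.toMatrix_mul_toMatrix_flip b,
    LinearMap.BilinForm.toMatrix_mul_basis_toMatrix b c B⟩

omit [DecidableEq ι] [DecidableEq κ] in
theorem exists_equiv_of_map_univ_eq {α : Type*} (a : ι → α) (b : κ → α)
    (h : Finset.univ.val.map a = Finset.univ.val.map b) : ∃ e : ι ≃ κ, b ∘ e = a := by
  classical
  have hc (x : α) : Fintype.card {i // a i = x} = Fintype.card {i // b i = x} := by
    have := congrArg (Multiset.count x) h
    simpa only [Multiset.count_map, Fintype.card_subtype, Finset.card_def, Finset.filter_val,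
      eq_comm] using this
  let e : ι ≃ κ := (Equiv.sigmaFiberEquiv a).symm.trans
    ((Equiv.sigmaCongrRight fun x => Fintype.equivOfCardEq (hc x)).trans (Equiv.sigmaFiberEquiv b))
  exact ⟨e, funext fun i => ((Fintype.equivOfCardEq (hc (a i))) ⟨i, rfl⟩).2⟩

theorem isCongruent_diagonal_of_map_univ_eq {a : ι → R} {b : κ → R}
    (h : Finset.univ.val.map a = Finset.univ.val.map b) :
    IsCongruent (diagonal a) (diagonal b) := by
  obtain ⟨e, rfl⟩ := exists_equiv_of_map_univ_eq a b h
  simpa using (IsCongruent.submatrix_equiv (diagonal b) e).symm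

omit [DecidableEq κ] [Fintype κ] in
theorem transpose_mul_diagonal_mul_apply (P : Matrix ι κ R) (a : ι → R) (j k : κ) :
    (Pᵀ * diagonal a * P) j k = ∑ i, a i * P i j * P i k := by
  rw [mul_apply]
  exact Finset.sum_congr rfl fun i _ => by rw [mul_diagonal, transpose_apply]; ring

end Congruence

section WittCancellation

variable {K : Type*} [Field K] {ι κ : Type*} [Fintype ι] [Fintype κ] [DecidableEq ι] [DecidableEq κ]

theorem isCongruent_diagonal_of_eq {a : ι → K} {b : κ → K} (hcard : Fintype.card ι = Fintype.card κ)
    (hb : ∀ i, b i ≠ 0) {P : Matrix ι κ K} (h : Pᵀ * diagonal a * P = diagonal b) :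
    IsCongruent (diagonal a) (diagonal b) := by
  let e := Fintype.equivOfCardEq hcard
  have h' : (P.submatrix id e)ᵀ * diagonal a * P.submatrix id e = (diagonal b).submatrix e e := by
    rw [← h]
    rfl
  refine (IsCongruent.of_transpose_mul_mul (isUnit_iff_ne_zero.2 fun hP => ?_) h').trans
    (IsCongruent.submatrix_equiv (diagonal b) e).symm
  have hdet := congrArg det h'
  rw [det_mul, hP, mul_zero, det_submatrix_equiv_self, det_diagonal] at hdet
  exact Finset.prod_ne_zero_iff.2 (fun i _ => hb i) hdet.symm

theorem exists_neg_two_mul_add_sq_mul_eq_one [NeZero (2 : K)] (α : K) :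
    ∃ t : K, -2 * t * α + t ^ 2 * (1 - α ^ 2) = 1 := by
  have h2 : (2 : K) ≠ 0 := two_ne_zero
  rcases eq_or_ne α 1 with rfl | h
  · exact ⟨-1 / 2, by field_simp; ring⟩
  · have h' : 1 - α ≠ 0 := sub_ne_zero.2 h.symm
    exact ⟨1 / (1 - α), by field_simp; ring⟩

/-- The matrix `Q` is the lower right block of `P` corrected by a multiple of the product of the
first column and the first row; a suitable multiple cancels the contribution of the first row. -/
theorem IsCongruent.cancel_option [NeZero (2 : K)] {c : K} {a : ι → K} {b : κ → K}
    (hb : ∀ i, b i ≠ 0)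
    (h : IsCongruent (diagonal (Option.elim · c a)) (diagonal (Option.elim · c b))) :
    IsCongruent (diagonal a) (diagonal b) := by
  have hcard : Fintype.card ι = Fintype.card κ := by simpa using h.card_eq
  obtain ⟨P, -, -, -, hP⟩ := h
  have entry (j k : Option κ) : c * P none j * P none k + ∑ i, a i * P (some i) j * P (some i) k =
      diagonal (Option.elim · c b) j k := by
    simpa [transpose_mul_diagonal_mul_apply] using congrFun₂ hP j k
  obtain ⟨t, ht⟩ := exists_neg_two_mul_add_sq_mul_eq_one (P none none)
  let Q : Matrix ι κ K := of fun i j => P (some i) (some j) + t * P (some i) none * P none (some j)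
  refine isCongruent_diagonal_of_eq hcard hb (P := Q) (Matrix.ext fun j k => ?_)
  have hjk := entry (some j) (some k)
  have hj := entry none (some j)
  have hk := entry none (some k)
  have h0 := entry none none
  simp only [diagonal_apply, reduceCtorEq, Option.some.injEq, Option.elim_none, Option.elim_some,
    if_true, if_false] at hjk hj hk h0
  have expand : ∑ i, a i * Q i j * Q i k =
      ∑ i, a i * P (some i) (some j) * P (some i) (some k)
        + t * P none (some j) * ∑ i, a i * P (some i) none * P (some i) (some k)
        + t * P none (some k) * ∑ i, a i * P (some i) none * P (some i) (some j)
        + t ^ 2 * P none (some j) * P none (some k) *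
          ∑ i, a i * P (some i) none * P (some i) none := by
    simp only [Finset.mul_sum, ← Finset.sum_add_distrib]
    exact Finset.sum_congr rfl fun i _ => by simp only [Q, of_apply]; ring
  rw [transpose_mul_diagonal_mul_apply, expand, diagonal_apply]
  linear_combination hjk + t * P none (some j) * hk + t * P none (some k) * hj +
    t ^ 2 * P none (some j) * P none (some k) * h0 + c * P none (some j) * P none (some k) * ht

end WittCancellation

/-! ### The Grothendieck–Witt group -/

section GrothendieckWitt

variable {K : Type*} [Field K]

open scoped Classical in
/-- Isometry of the diagonal forms with coefficients `s` and `t`. -/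
def IsDiagCongruent (s t : Multiset Kˣ) : Prop :=
  IsCongruent (diagonal fun i : s => ((i : Kˣ) : K)) (diagonal fun i : t => ((i : Kˣ) : K))

open scoped Classical in
theorem isCongruent_diagonal_toType {ι : Type*} [Fintype ι] [DecidableEq ι]
    (a : ι → Kˣ) : IsCongruent (diagonal fun i => (a i : K))
      (diagonal fun i : (Finset.univ.val.map a : Multiset Kˣ) => ((i : Kˣ) : K)) := by
  refine isCongruent_diagonal_of_map_univ_eq ?_
  rw [Multiset.map_univ (Finset.univ.val.map a) fun u : Kˣ => (u : K), Multiset.map_map]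
  rfl

theorem isDiagCongruent_map_univ_iff {ι κ : Type*} [Fintype ι] [Fintype κ] [DecidableEq ι]
    [DecidableEq κ] {a : ι → Kˣ} {b : κ → Kˣ} :
    IsDiagCongruent (Finset.univ.val.map a) (Finset.univ.val.map b) ↔
      IsCongruent (diagonal fun i => (a i : K)) (diagonal fun i => (b i : K)) := by
  classical
  have ha := isCongruent_diagonal_toType a
  have hb := isCongruent_diagonal_toType b
  exact ⟨fun h => (ha.trans h).trans hb.symm, fun h => (ha.symm.trans h).trans hb⟩

theorem exists_map_univ_eq {α : Type*} (s : Multiset α) :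
    ∃ (n : ℕ) (a : Fin n → α), Finset.univ.val.map a = s := by
  obtain ⟨l, rfl⟩ := Quot.exists_rep s
  exact ⟨l.length, l.get, by simp⟩

theorem map_univ_sumElim {α ι κ : Type*} [Fintype ι] [Fintype κ] (a : ι → α) (b : κ → α) :
    Finset.univ.val.map (Sum.elim a b) = Finset.univ.val.map a + Finset.univ.val.map b := by
  rw [← Finset.univ_disjSum_univ, Finset.val_disjSum, Multiset.disjSum, Multiset.map_add,
    Multiset.map_map, Multiset.map_map]
  rfl

theorem map_univ_optionElim {α ι : Type*} [Fintype ι] (c : α) (a : ι → α) :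
    Finset.univ.val.map (Option.elim · c a) = c ::ₘ Finset.univ.val.map a := by
  rw [univ_option]
  simp [Finset.insertNone]
  rfl

theorem IsDiagCongruent.add {s t s' t' : Multiset Kˣ} (h : IsDiagCongruent s t)
    (h' : IsDiagCongruent s' t') : IsDiagCongruent (s + s') (t + t') := by
  obtain ⟨_, a, rfl⟩ := exists_map_univ_eq s
  obtain ⟨_, b, rfl⟩ := exists_map_univ_eq t
  obtain ⟨_, a', rfl⟩ := exists_map_univ_eq s'
  obtain ⟨_, b', rfl⟩ := exists_map_univ_eq t'
  rw [isDiagCongruent_map_univ_iff] at h h'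
  rw [← map_univ_sumElim, ← map_univ_sumElim, isDiagCongruent_map_univ_iff]
  have := h.fromBlocks h'
  simp only [fromBlocks_diagonal] at this
  convert this using 2 <;> ext (i | i) <;> rfl

theorem IsDiagCongruent.of_add_left [NeZero (2 : K)] {s t : Multiset Kˣ} (u : Multiset Kˣ)
    (h : IsDiagCongruent (u + s) (u + t)) : IsDiagCongruent s t := by
  induction u using Multiset.induction_on with
  | empty => simpa using h
  | cons c u ih =>
    refine ih ?_
    rw [Multiset.cons_add, Multiset.cons_add] at h
    obtain ⟨_, a, ha⟩ := exists_map_univ_eq (u + s)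
    obtain ⟨_, b, hb⟩ := exists_map_univ_eq (u + t)
    rw [← ha, ← hb] at h ⊢
    rw [← map_univ_optionElim, ← map_univ_optionElim, isDiagCongruent_map_univ_iff] at h
    rw [isDiagCongruent_map_univ_iff]
    refine IsCongruent.cancel_option (c := (c : K)) (fun i => (b i).ne_zero) ?_
    convert h using 2 <;> ext (_ | _) <;> rfl

variable (K) in
/-- Isometry of diagonal forms, as a congruence on the monoid of multisets of coefficients. -/
def diagCon : AddCon (Multiset Kˣ) where
  r := IsDiagCongruent
  iseqv := by
    classical
    exact ⟨fun _ => IsCongruent.refl _, IsCongruent.symm, IsCongruent.trans⟩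
  add' := .add

variable (K) in
/-- The Grothendieck–Witt group of nondegenerate symmetric bilinear forms over a field, generated by
the diagonal forms. -/
abbrev GrothendieckWitt : Type _ := Algebra.GrothendieckAddGroup (diagCon K).Quotient

instance [NeZero (2 : K)] : IsCancelAdd (diagCon K).Quotient :=
  have : IsLeftCancelAdd (diagCon K).Quotient := ⟨by
    rintro ⟨u⟩ ⟨s⟩ ⟨t⟩ h
    exact Quotient.sound (IsDiagCongruent.of_add_left u (Quotient.exact h))⟩
  AddCommMagma.IsLeftCancelAdd.toIsCancelAdd _

namespace GrothendieckWitt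

/-- The class of the diagonal form with the given coefficients. -/
noncomputable def ofDiagonal : Multiset Kˣ →+ GrothendieckWitt K :=
  (Algebra.GrothendieckAddGroup.of (M := (diagCon K).Quotient)).comp (diagCon K).mk'

theorem ofDiagonal_eq_iff [NeZero (2 : K)] {s t : Multiset Kˣ} :
    ofDiagonal s = ofDiagonal t ↔ IsDiagCongruent s t :=
  Algebra.GrothendieckAddGroup.of_injective.eq_iff.trans (AddCon.eq _)

/-- The class `⟨a⟩` of the form `a x²`, with the junk value `⟨0⟩ = 0`. -/
noncomputable def rankOne (a : K) : GrothendieckWitt K :=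
  open scoped Classical in if h : a ≠ 0 then ofDiagonal {Units.mk0 a h} else 0

theorem rankOne_unit (a : Kˣ) : rankOne (a : K) = ofDiagonal {a} := by
  rw [rankOne, dif_pos a.ne_zero, Units.mk0_val]

theorem sum_rankOne_unit {ι : Type*} [Fintype ι] (a : ι → Kˣ) :
    ∑ i, rankOne (a i : K) = ofDiagonal (Finset.univ.val.map a) := by
  simp only [rankOne_unit]
  rw [← map_sum, ← Multiset.sum_map_singleton (Finset.univ.val.map a), Multiset.map_map]
  rfl

section Diagonal

variable [NeZero (2 : K)] {ι κ : Type*} [Fintype ι] [Fintype κ] [DecidableEq ι] [DecidableEq κ]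
  {a : ι → K} {b : κ → K}

theorem sum_rankOne_eq_iff (ha : ∀ i, a i ≠ 0) (hb : ∀ i, b i ≠ 0) :
    ∑ i, rankOne (a i) = ∑ i, rankOne (b i) ↔ IsCongruent (diagonal a) (diagonal b) := by
  lift a to ι → Kˣ using fun i => (ha i).isUnit
  lift b to κ → Kˣ using fun i => (hb i).isUnit
  rw [sum_rankOne_unit, sum_rankOne_unit, ofDiagonal_eq_iff, isDiagCongruent_map_univ_iff]

theorem sum_rankOne_eq_of_eq (hcard : Fintype.card ι = Fintype.card κ) (ha : ∀ i, a i ≠ 0)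
    (hb : ∀ i, b i ≠ 0) (P : Matrix ι κ K) (h : Pᵀ * diagonal a * P = diagonal b) :
    ∑ i, rankOne (a i) = ∑ i, rankOne (b i) :=
  (sum_rankOne_eq_iff ha hb).2 (isCongruent_diagonal_of_eq hcard hb h)

end Diagonal

section Relations

variable [NeZero (2 : K)]

theorem rankOne_mul_sq (a : K) {b : K} (hb : b ≠ 0) : rankOne (a * b ^ 2) = rankOne a := by
  rcases eq_or_ne a 0 with rfl | ha
  · rw [zero_mul]
  · have := sum_rankOne_eq_of_eq (ι := Unit) (κ := Unit) (a := fun _ => a)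
      (b := fun _ => a * b ^ 2) rfl (by simp [ha]) (by simp [ha, hb]) (of fun _ _ => b)
      (by ext; simp [mul_apply]; ring)
    simpa using this.symm

theorem rankOne_add_rankOne {a₁ a₂ b : K} (x y : K) (ha₁ : a₁ ≠ 0) (ha₂ : a₂ ≠ 0) (hb : b ≠ 0)
    (h : a₁ * x ^ 2 + a₂ * y ^ 2 = b) :
    rankOne a₁ + rankOne a₂ = rankOne b + rankOne (a₁ * a₂ * b) := by
  have := sum_rankOne_eq_of_eq (a := ![a₁, a₂]) (b := ![b, a₁ * a₂ * b]) rfl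
    (by simp [Fin.forall_fin_two, *]) (by simp [Fin.forall_fin_two, *])
    !![x, -a₂ * y; y, a₁ * x]
    (by
      subst h
      ext i j
      rw [transpose_mul_diagonal_mul_apply]
      fin_cases i <;> fin_cases j <;> simp <;> ring)
  simpa [Fin.sum_univ_two] using this

variable (K) in
/-- The class of the hyperbolic plane. -/
noncomputable def hyperbolic : GrothendieckWitt K := rankOne 1 + rankOne (-1)

theorem rankOne_add_rankOne_neg {a : K} (ha : a ≠ 0) :
    rankOne a + rankOne (-a) = hyperbolic K := by
  have h2 : (2 : K) ≠ 0 := two_ne_zero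
  rw [rankOne_add_rankOne ((1 + a⁻¹) / 2) ((1 - a⁻¹) / 2) ha (neg_ne_zero.2 ha) one_ne_zero
    (by field_simp; ring), hyperbolic, ← rankOne_mul_sq (-1) ha]
  congr 2
  ring

end Relations

theorem four_nsmul_rankOne_mul_natCast [CharZero K] {s : K} (hs : s ≠ 0) {c : ℕ} (hc : c ≠ 0) :
    4 • rankOne (s * c) = 4 • rankOne s := by
  obtain ⟨x, y, z, w, h⟩ := Nat.sum_four_squares c
  have hq : (c : K) = x ^ 2 + y ^ 2 + z ^ 2 + w ^ 2 := by exact_mod_cast h.symm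
  have := sum_rankOne_eq_of_eq (a := fun _ : Fin 4 => s) (b := fun _ : Fin 4 => s * c) rfl
    (fun _ => hs) (fun _ => mul_ne_zero hs (Nat.cast_ne_zero.2 hc))
    -- Left multiplication by the quaternion `x + y i + z j + w k`.
    !![(x : K), -y, -z, -w; (y : K), x, -w, z; (z : K), w, x, -y; (w : K), -z, y, x]
    (by
      rw [hq]
      ext i j
      rw [transpose_mul_diagonal_mul_apply]
      fin_cases i <;> fin_cases j <;> simp [Fin.sum_univ_four] <;> ring)
  simpa using this.symm

section Matrix

variable {ι κ : Type*} [Fintype ι] [Fintype κ] [DecidableEq ι] [DecidableEq κ]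

open scoped Classical in
/-- The class of the symmetric bilinear form with Gram matrix `A`, computed from a diagonalisation;
the junk value is `0` if `A` is not congruent to a diagonal matrix with nonzero entries. -/
noncomputable def ofMatrix (A : Matrix ι ι K) : GrothendieckWitt K :=
  if h : ∃ a : ι → K, (∀ i, a i ≠ 0) ∧ IsCongruent A (diagonal a) then
    ∑ i, rankOne (h.choose i) else 0

variable [NeZero (2 : K)]

theorem ofMatrix_eq_sum {A : Matrix ι ι K} {a : κ → K} (ha : ∀ i, a i ≠ 0)
    (h : IsCongruent A (diagonal a)) : ofMatrix A = ∑ i, rankOne (a i) := by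
  have hex : ∃ a : ι → K, (∀ i, a i ≠ 0) ∧ IsCongruent A (diagonal a) := by
    let e : ι ≃ κ := Fintype.equivOfCardEq h.card_eq
    refine ⟨a ∘ e, fun i => ha _, h.trans ?_⟩
    rw [← submatrix_diagonal_equiv]
    exact .submatrix_equiv _ e
  rw [ofMatrix, dif_pos hex, sum_rankOne_eq_iff hex.choose_spec.1 ha]
  exact hex.choose_spec.2.symm.trans h

theorem exists_isCongruent_diagonal {A : Matrix ι ι K} (hA : A.IsSymm) :
    ∃ a : ι → K, IsCongruent A (diagonal a) := by
  have : Invertible (2 : K) := invertibleOfNonzero two_ne_zero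
  have hsymm : (Matrix.toBilin' A).IsSymm := isSymm_toBilin'_iff_isSymm.2 hA
  obtain ⟨v, hv⟩ := LinearMap.BilinForm.exists_orthogonal_basis
    (LinearMap.BilinForm.isSymm_iff.1 hsymm)
  let e : Fin (Module.finrank K (ι → K)) ≃ ι := (Fintype.equivFinOfCardEq (by simp)).symm
  refine ⟨fun i => Matrix.toBilin' A (v (e.symm i)) (v (e.symm i)), ?_⟩
  have h := isCongruent_toMatrix (Pi.basisFun K ι) (v.reindex e) (Matrix.toBilin' A)
  rw [LinearMap.BilinForm.toMatrix_basisFun, LinearMap.BilinForm.toMatrix'_toBilin'] at h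
  convert h using 1
  ext i j
  rw [LinearMap.BilinForm.toMatrix_apply, Module.Basis.reindex_apply, Module.Basis.reindex_apply]
  rcases eq_or_ne i j with rfl | hij
  · exact diagonal_apply_eq _ _
  · rw [diagonal_apply_ne _ hij]
    exact (hv (e.symm.injective.ne hij)).symm

theorem exists_isCongruent_diagonal_ne_zero {A : Matrix ι ι K} (hA : A.IsSymm) (hdet : A.det ≠ 0) :
    ∃ a : ι → K, (∀ i, a i ≠ 0) ∧ IsCongruent A (diagonal a) := by
  obtain ⟨a, ha⟩ := exists_isCongruent_diagonal hA
  refine ⟨a, fun i => ?_, ha⟩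
  have h := ha.det_ne_zero hdet
  rw [det_diagonal] at h
  exact Finset.prod_ne_zero_iff.1 h i (Finset.mem_univ i)

theorem ofMatrix_fromBlocks {A : Matrix ι ι K} {B : Matrix κ κ K} (hA : A.IsSymm) (hA' : A.det ≠ 0)
    (hB : B.IsSymm) (hB' : B.det ≠ 0) :
    ofMatrix (fromBlocks A 0 0 B) = ofMatrix A + ofMatrix B := by
  obtain ⟨a, ha, hAa⟩ := exists_isCongruent_diagonal_ne_zero hA hA'
  obtain ⟨b, hb, hBb⟩ := exists_isCongruent_diagonal_ne_zero hB hB'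
  have h := hAa.fromBlocks hBb
  rw [fromBlocks_diagonal] at h
  rw [ofMatrix_eq_sum (Sum.forall.2 ⟨ha, hb⟩) h, ofMatrix_eq_sum ha hAa, ofMatrix_eq_sum hb hBb,
    Fintype.sum_sum_type]
  rfl

end Matrix

end GrothendieckWitt

end GrothendieckWitt

section Signature

variable {K : Type*} [Field K] {ι κ : Type*} [Fintype ι] [Fintype κ] [DecidableEq ι] [DecidableEq κ]

theorem toQuadraticForm'_apply_eq (A : Matrix ι ι K) (x : ι → K) :
    A.toQuadraticForm' x = x ⬝ᵥ A *ᵥ x := by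
  simp [Matrix.toQuadraticForm', Matrix.toLinearMap₂'_apply']

theorem toQuadraticForm'_diagonal (a : ι → K) :
    (diagonal a).toQuadraticForm' = QuadraticMap.weightedSumSquares K a := by
  ext x
  rw [toQuadraticForm'_apply_eq, QuadraticMap.weightedSumSquares_apply, dotProduct]
  exact Finset.sum_congr rfl fun i _ => by rw [mulVec_diagonal, smul_eq_mul]; ring

theorem IsCongruent.equivalent_toQuadraticForm' {A : Matrix ι ι K} {B : Matrix κ κ K}
    (h : IsCongruent A B) : A.toQuadraticForm'.Equivalent B.toQuadraticForm' := by
  obtain ⟨P, Q, hPQ, hQP, rfl⟩ := h.symm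
  refine ⟨⟨toLin'OfInv hQP hPQ, fun x => ?_⟩⟩
  change B.toQuadraticForm' (P *ᵥ x) = _
  rw [toQuadraticForm'_apply_eq, toQuadraticForm'_apply_eq, ← mulVec_mulVec, ← mulVec_mulVec,
    dotProduct_mulVec x, vecMul_transpose]

variable [LinearOrder K] [IsStrictOrderedRing K]

theorem IsCongruent.ncard_pos_eq {a : ι → K} {b : κ → K}
    (h : IsCongruent (diagonal a) (diagonal b)) : {i | 0 < a i}.ncard = {i | 0 < b i}.ncard := by
  have h := h.equivalent_toQuadraticForm'.sigPos_eq
  rwa [toQuadraticForm'_diagonal, toQuadraticForm'_diagonal,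
    QuadraticForm.sigPos_weightedSumSquares, QuadraticForm.sigPos_weightedSumSquares] at h

theorem IsCongruent.ncard_neg_eq {a : ι → K} {b : κ → K}
    (h : IsCongruent (diagonal a) (diagonal b)) : {i | a i < 0}.ncard = {i | b i < 0}.ncard := by
  have h := h.equivalent_toQuadraticForm'.sigNeg_eq
  rwa [toQuadraticForm'_diagonal, toQuadraticForm'_diagonal,
    QuadraticForm.sigNeg_weightedSumSquares, QuadraticForm.sigNeg_weightedSumSquares] at h

omit [DecidableEq ι] in
theorem countP_map_univ {α : Type*} (p : α → Prop) [DecidablePred p] (a : ι → α) :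
    (Finset.univ.val.map a).countP p = {i | p (a i)}.ncard := by
  rw [Multiset.countP_map, Set.ncard_eq_toFinset_card', Set.toFinset_ofPred]
  rfl

theorem IsDiagCongruent.countP_pos_eq {s t : Multiset Kˣ} (h : IsDiagCongruent s t) :
    s.countP (fun u : Kˣ => 0 < (u : K)) = t.countP fun u : Kˣ => 0 < (u : K) := by
  obtain ⟨_, a, rfl⟩ := exists_map_univ_eq s
  obtain ⟨_, b, rfl⟩ := exists_map_univ_eq t
  rw [countP_map_univ, countP_map_univ]
  exact (isDiagCongruent_map_univ_iff.1 h).ncard_pos_eq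

theorem IsDiagCongruent.countP_neg_eq {s t : Multiset Kˣ} (h : IsDiagCongruent s t) :
    s.countP (fun u : Kˣ => (u : K) < 0) = t.countP fun u : Kˣ => (u : K) < 0 := by
  obtain ⟨_, a, rfl⟩ := exists_map_univ_eq s
  obtain ⟨_, b, rfl⟩ := exists_map_univ_eq t
  rw [countP_map_univ, countP_map_univ]
  exact (isDiagCongruent_map_univ_iff.1 h).ncard_neg_eq

namespace GrothendieckWitt

/-- The positive index of inertia. -/
noncomputable def posIndex : GrothendieckWitt K →+ ℤ :=
  Algebra.GrothendieckAddGroup.lift <| (diagCon K).lift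
    ((Nat.castAddMonoidHom ℤ).comp (Multiset.countPAddMonoidHom fun u : Kˣ => 0 < (u : K)))
    fun _ _ h => congrArg (Nat.cast : ℕ → ℤ) (IsDiagCongruent.countP_pos_eq h)

/-- The negative index of inertia. -/
noncomputable def negIndex : GrothendieckWitt K →+ ℤ :=
  Algebra.GrothendieckAddGroup.lift <| (diagCon K).lift
    ((Nat.castAddMonoidHom ℤ).comp (Multiset.countPAddMonoidHom fun u : Kˣ => (u : K) < 0))
    fun _ _ h => congrArg (Nat.cast : ℕ → ℤ) (IsDiagCongruent.countP_neg_eq h)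

theorem posIndex_ofDiagonal (s : Multiset Kˣ) :
    posIndex (ofDiagonal s) = s.countP fun u : Kˣ => 0 < (u : K) :=
  DFunLike.congr_fun (Algebra.GrothendieckAddGroup.lift.symm_apply_apply _) ((diagCon K).mk' s)

theorem negIndex_ofDiagonal (s : Multiset Kˣ) :
    negIndex (ofDiagonal s) = s.countP fun u : Kˣ => (u : K) < 0 :=
  DFunLike.congr_fun (Algebra.GrothendieckAddGroup.lift.symm_apply_apply _) ((diagCon K).mk' s)

omit [DecidableEq ι] in
theorem posIndex_sum_rankOne {a : ι → K} (ha : ∀ i, a i ≠ 0) :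
    posIndex (∑ i, rankOne (a i)) = {i | 0 < a i}.ncard := by
  lift a to ι → Kˣ using fun i => (ha i).isUnit
  rw [sum_rankOne_unit, posIndex_ofDiagonal, countP_map_univ]

omit [DecidableEq ι] in
theorem negIndex_sum_rankOne {a : ι → K} (ha : ∀ i, a i ≠ 0) :
    negIndex (∑ i, rankOne (a i)) = {i | a i < 0}.ncard := by
  lift a to ι → Kˣ using fun i => (ha i).isUnit
  rw [sum_rankOne_unit, negIndex_ofDiagonal, countP_map_univ]

theorem posIndex_rankOne {a : K} (ha : a ≠ 0) :
    posIndex (rankOne a) = if 0 < a then 1 else 0 := by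
  lift a to Kˣ using ha.isUnit
  simp [rankOne_unit, posIndex_ofDiagonal, ← Multiset.cons_zero, Multiset.countP_cons]

theorem negIndex_rankOne {a : K} (ha : a ≠ 0) :
    negIndex (rankOne a) = if a < 0 then 1 else 0 := by
  lift a to Kˣ using ha.isUnit
  simp [rankOne_unit, negIndex_ofDiagonal, ← Multiset.cons_zero, Multiset.countP_cons]

end GrothendieckWitt

theorem isCongruent_diagonal_eigenvalues {A : Matrix ι ι ℝ} (hA : A.IsHermitian) :
    IsCongruent A (diagonal hA.eigenvalues) := by
  let U : Matrix ι ι ℝ := hA.eigenvectorUnitary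
  have hU : U * star U = 1 := Unitary.coe_mul_star_self _
  have hU' : star U * U = 1 := Unitary.coe_star_mul_self _
  refine IsCongruent.symm ⟨star U, U, hU', hU, ?_⟩
  conv_rhs => rw [hA.spectral_theorem]
  rw [Unitary.conjStarAlgAut_apply]
  congr 1

omit [Fintype ι] [DecidableEq ι] in
theorem isHermitian_map_intCast {G : Matrix ι ι ℤ} (hG : G.IsSymm) :
    (G.map ((↑·) : ℤ → ℝ)).IsHermitian := by
  ext i j
  simp [conjTranspose_apply, hG.apply i j]

theorem det_map_intCast_ne_zero {G : Matrix ι ι ℤ} (hG : G.det ≠ 0) :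
    (G.map (Int.castRingHom ℚ)).det ≠ 0 := by
  rw [← RingHom.mapMatrix_apply, ← RingHom.map_det]
  exact Int.cast_ne_zero.2 hG

/-- Over `ℚ` a diagonalisation exists by Gram–Schmidt, over `ℝ` by the spectral theorem; Sylvester's
law of inertia compares the two. -/
theorem exists_isCongruent_diagonal_eigenvalues {G : Matrix ι ι ℤ} (hG : G.IsSymm)
    (hdet : G.det ≠ 0) :
    ∃ a : ι → ℚ, (∀ i, a i ≠ 0) ∧ IsCongruent (G.map (Int.castRingHom ℚ)) (diagonal a) ∧
      IsCongruent (diagonal fun i => (a i : ℝ))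
        (diagonal (isHermitian_map_intCast hG).eigenvalues) := by
  obtain ⟨a, ha, h⟩ := GrothendieckWitt.exists_isCongruent_diagonal_ne_zero
    (hG.map (Int.castRingHom ℚ)) (det_map_intCast_ne_zero hdet)
  have h' := h.map (Rat.castHom ℝ)
  rw [diagonal_map (map_zero _), Matrix.map_map] at h'
  refine ⟨a, ha, h, h'.symm.trans ?_⟩
  convert isCongruent_diagonal_eigenvalues (isHermitian_map_intCast hG) using 2
  ext
  simp

theorem sigPlus_eq_posIndex {n : ℕ} {G : Matrix (Fin n) (Fin n) ℤ} (hG : G.IsSymm)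
    (hdet : G.det ≠ 0) : (sigPlus G : ℤ) =
      GrothendieckWitt.posIndex (GrothendieckWitt.ofMatrix (G.map (Int.castRingHom ℚ))) := by
  obtain ⟨a, ha, h, h'⟩ := exists_isCongruent_diagonal_eigenvalues hG hdet
  rw [GrothendieckWitt.ofMatrix_eq_sum ha h, GrothendieckWitt.posIndex_sum_rankOne ha, sigPlus,
    dif_pos (isHermitian_map_intCast hG)]
  have := h'.ncard_pos_eq.symm
  simp only [Rat.cast_pos] at this
  exact congrArg (Nat.cast : ℕ → ℤ) ((Nat.card_coe_set_eq _).trans this)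

theorem sigMinus_eq_negIndex {n : ℕ} {G : Matrix (Fin n) (Fin n) ℤ} (hG : G.IsSymm)
    (hdet : G.det ≠ 0) : (sigMinus G : ℤ) =
      GrothendieckWitt.negIndex (GrothendieckWitt.ofMatrix (G.map (Int.castRingHom ℚ))) := by
  obtain ⟨a, ha, h, h'⟩ := exists_isCongruent_diagonal_eigenvalues hG hdet
  rw [GrothendieckWitt.ofMatrix_eq_sum ha h, GrothendieckWitt.negIndex_sum_rankOne ha, sigMinus,
    dif_pos (isHermitian_map_intCast hG)]
  have := h'.ncard_neg_eq.symm
  simp only [Rat.cast_lt_zero] at this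
  exact congrArg (Nat.cast : ℕ → ℤ) ((Nat.card_coe_set_eq _).trans this)

open GrothendieckWitt

variable {n : ℕ} {G : Matrix (Fin n) (Fin n) ℤ}

theorem sigPlus_eq_ncard (hG : G.IsSymm) (hdet : G.det ≠ 0) {a : Fin n → ℚ} (ha : ∀ i, a i ≠ 0)
    (h : IsCongruent (G.map (Int.castRingHom ℚ)) (diagonal a)) :
    sigPlus G = {i | 0 < a i}.ncard := by
  rw [← Nat.cast_inj (R := ℤ), sigPlus_eq_posIndex hG hdet, ofMatrix_eq_sum ha h,
    posIndex_sum_rankOne ha]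

theorem sigMinus_eq_ncard (hG : G.IsSymm) (hdet : G.det ≠ 0) {a : Fin n → ℚ} (ha : ∀ i, a i ≠ 0)
    (h : IsCongruent (G.map (Int.castRingHom ℚ)) (diagonal a)) :
    sigMinus G = {i | a i < 0}.ncard := by
  rw [← Nat.cast_inj (R := ℤ), sigMinus_eq_negIndex hG hdet, ofMatrix_eq_sum ha h,
    negIndex_sum_rankOne ha]

theorem sigPlus_add_sigMinus (hG : G.IsSymm) (hdet : G.det ≠ 0) : sigPlus G + sigMinus G = n := by
  obtain ⟨a, ha, h⟩ := exists_isCongruent_diagonal_ne_zero (hG.map (Int.castRingHom ℚ))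
    (det_map_intCast_ne_zero hdet)
  have hcompl : {i | a i < 0} = {i | 0 < a i}ᶜ := by
    ext i
    simpa using (ha i).le_iff_lt.symm
  rw [sigPlus_eq_ncard hG hdet ha h, sigMinus_eq_ncard hG hdet ha h, hcompl,
    Set.ncard_add_ncard_compl, Nat.card_fin]

theorem sigPlus_neg (hG : G.IsSymm) (hdet : G.det ≠ 0) : sigPlus (-G) = sigMinus G := by
  obtain ⟨a, ha, h⟩ := exists_isCongruent_diagonal_ne_zero (hG.map (Int.castRingHom ℚ))
    (det_map_intCast_ne_zero hdet)
  rw [sigMinus_eq_ncard hG hdet ha h,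
    sigPlus_eq_ncard hG.neg (a := fun i => -a i) (by simpa [det_neg] using hdet)
      (by simpa using ha) (by simpa [Matrix.map_neg, diagonal_neg] using h.neg)]
  simp

theorem sigMinus_neg (hG : G.IsSymm) (hdet : G.det ≠ 0) : sigMinus (-G) = sigPlus G := by
  rw [← sigPlus_neg hG.neg (by simpa [det_neg] using hdet), neg_neg]

end Signature

/-! ### Residues of rational forms -/

section WittSymbol

variable {K A : Type*} [Field K] [AddCommGroup A]

/-- A function on a field satisfying, on nonzero arguments, the relations that hold between the
classes `⟨a⟩` in the Witt group. Its value at `0` is irrelevant. -/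
structure IsWittSymbol (F : K → A) : Prop where
  mul_sq {a b : K} (ha : a ≠ 0) (hb : b ≠ 0) : F (a * b ^ 2) = F a
  add_neg {a : K} (ha : a ≠ 0) : F a + F (-a) = 0
  add {a b : K} (ha : a ≠ 0) (hb : b ≠ 0) (hab : a + b ≠ 0) :
    F a + F b = F (a + b) + F (a * b * (a + b))

namespace IsWittSymbol

variable {F : K → A}

theorem neg (hF : IsWittSymbol F) {a : K} (ha : a ≠ 0) : F (-a) = -F a :=
  eq_neg_of_add_eq_zero_right (hF.add_neg ha)

/-- A value `v` of the diagonal form with coefficients `a` at `y`, where `l` lists the pairs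
`(a, y)`, splits off: as `⟨v⟩` if `v ≠ 0`, and as part of a hyperbolic plane otherwise. -/
theorem exists_sum_eq (hF : IsWittSymbol F) (l : List (K × K)) (hl : ∀ x ∈ l, x.1 ≠ 0) {v : K}
    (hv : (l.map fun x => x.1 * x.2 ^ 2).sum = v) :
    (v ≠ 0 → ∃ l' : List K, l'.length + 1 = l.length ∧ (∀ a ∈ l', a ≠ 0) ∧
      (l.map fun x => F x.1).sum = F v + (l'.map F).sum) ∧
    (v = 0 → (∃ x ∈ l, x.2 ≠ 0) → ∃ l' : List K, l'.length + 2 = l.length ∧ (∀ a ∈ l', a ≠ 0) ∧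
      (l.map fun x => F x.1).sum = (l'.map F).sum) := by
  induction l generalizing v with
  | nil => simp [← hv]
  | cons x l ih =>
    obtain ⟨a, y⟩ := x
    obtain ⟨ha, hl⟩ := List.forall_mem_cons.1 hl
    obtain ⟨ih₁, ih₂⟩ := ih hl rfl
    set w := (l.map fun x => x.1 * x.2 ^ 2).sum
    replace hv : a * y ^ 2 + w = v := by simpa using hv
    rcases eq_or_ne y 0 with rfl | hy
    · obtain rfl : w = v := by simpa using hv
      constructor
      · intro hv
        obtain ⟨l', hlen, hl', h⟩ := ih₁ hv
        exact ⟨a :: l', by simp [← hlen], List.forall_mem_cons.2 ⟨ha, hl'⟩,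
          by simp [h, add_left_comm]⟩
      · intro hv hy
        obtain ⟨l', hlen, hl', h⟩ := ih₂ hv (by simpa using hy)
        exact ⟨a :: l', by simp [← hlen], List.forall_mem_cons.2 ⟨ha, hl'⟩, by simp [h]⟩
    have hay : a * y ^ 2 ≠ 0 := mul_ne_zero ha (pow_ne_zero 2 hy)
    rcases eq_or_ne w 0 with hw | hw
    · obtain rfl : a * y ^ 2 = v := by simpa [hw] using hv
      exact ⟨fun _ => ⟨l.map Prod.fst, by simp, by simpa using hl, by
        simp [hF.mul_sq ha hy, Function.comp_def]⟩, fun h => (hay h).elim⟩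
    obtain ⟨l', hlen, hl', h⟩ := ih₁ hw
    constructor
    · intro hv'
      refine ⟨a * y ^ 2 * w * v :: l', by simp [← hlen],
        List.forall_mem_cons.2 ⟨mul_ne_zero (mul_ne_zero hay hw) hv', hl'⟩, ?_⟩
      simp [h, ← hF.mul_sq ha hy, ← add_assoc, hF.add hay hw (hv ▸ hv'), hv]
    · rintro rfl -
      refine ⟨l', by simp [← hlen], hl', ?_⟩
      simp [h, ← hF.mul_sq ha hy, ← add_assoc, eq_neg_of_add_eq_zero_right hv, hF.add_neg hay]

theorem exists_anisotropic (hF : IsWittSymbol F) {n : ℕ} (a : Fin n → K) (ha : ∀ i, a i ≠ 0) :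
    ∃ (m : ℕ) (b : Fin m → K), (∀ y : Fin m → K, ∑ i, b i * y i ^ 2 = 0 → y = 0) ∧
      ∑ i, F (a i) = ∑ i, F (b i) := by
  induction n using Nat.strong_induction_on with
  | _ n ih =>
    by_cases h : ∀ y : Fin n → K, ∑ i, a i * y i ^ 2 = 0 → y = 0
    · exact ⟨n, a, h, rfl⟩
    push Not at h
    obtain ⟨y, hy, hy0⟩ := h
    obtain ⟨i, hi⟩ := Function.ne_iff.1 hy0
    obtain ⟨l', hlen, hl', hsum⟩ := (hF.exists_sum_eq (List.ofFn fun i => (a i, y i))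
      (by simpa [List.forall_mem_ofFn_iff] using ha)
      (by simpa [List.map_ofFn, Function.comp_def, List.sum_ofFn] using hy)).2 rfl
      ⟨(a i, y i), List.mem_ofFn.2 ⟨i, rfl⟩, hi⟩
    obtain ⟨m, b, hb, h⟩ := ih l'.length (by simp at hlen; omega) l'.get
      fun i => hl' _ (l'.get_mem i)
    refine ⟨m, b, hb, h ▸ ?_⟩
    simpa [List.map_ofFn, Function.comp_def, List.sum_ofFn, Fin.sum_univ_fun_getElem l' F]
      using hsum

theorem exists_anisotropic_of_mem_closure (hF : IsWittSymbol F) {x : A}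
    (hx : x ∈ AddSubgroup.closure (F '' {0}ᶜ)) :
    ∃ (m : ℕ) (b : Fin m → K), (∀ y : Fin m → K, ∑ i, b i * y i ^ 2 = 0 → y = 0) ∧
      x = ∑ i, F (b i) := by
  rw [← AddSubgroup.mem_toAddSubmonoid, AddSubgroup.closure_toAddSubmonoid] at hx
  obtain ⟨l, hl, rfl⟩ := AddSubmonoid.exists_list_of_mem_closure hx
  have h (i : Fin l.length) : ∃ a, a ≠ 0 ∧ F a = l.get i := by
    obtain ⟨a, ha, h⟩ | ⟨a, ha, h⟩ := hl _ (l.get_mem i)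
    · exact ⟨a, ha, h⟩
    · exact ⟨-a, neg_ne_zero.2 ha, by rw [hF.neg ha, h, neg_neg]⟩
  choose a ha h using h
  rw [← Fin.sum_univ_getElem]
  simpa [h] using hF.exists_anisotropic a ha

end IsWittSymbol

end WittSymbol

section ResidueSymbol

open GrothendieckWitt QuotientAddGroup

/-- The subgroup of the Grothendieck–Witt group of `ℚ` generated by the classes `⟨u⟩` of the nonzero
integers `u` whose prime factors are all less than `p`. -/
noncomputable def smoothSubgroup (p : ℕ) : AddSubgroup (GrothendieckWitt ℚ) :=
  AddSubgroup.closure ((fun u : ℤ => rankOne (u : ℚ)) '' {u | u.natAbs ∈ p.smoothNumbers})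

theorem rankOne_mem_smoothSubgroup {p : ℕ} {u : ℤ} (hu : u.natAbs ∈ p.smoothNumbers) :
    rankOne (u : ℚ) ∈ smoothSubgroup p :=
  AddSubgroup.subset_closure ⟨u, hu, rfl⟩

theorem mk_rankOne_natCast_eq_zero {p n : ℕ} (hn : n ∈ p.smoothNumbers) :
    (mk (rankOne (n : ℚ)) : GrothendieckWitt ℚ ⧸ smoothSubgroup p) = 0 :=
  (eq_zero_iff _).2 (rankOne_mem_smoothSubgroup (u := n) hn)

/-- The class of `⟨p a⟩` modulo classes involving only primes less than `p`; it is the image of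
`⟨a⟩` under a section of Milnor's residue map at `p`. -/
noncomputable def residueSymbol (p : ℕ) (a : ZMod p) : GrothendieckWitt ℚ ⧸ smoothSubgroup p :=
  mk (rankOne ((p : ℚ) * a.val))

variable {p : ℕ}

theorem mk_rankOne_mul_eq (hp : p.Prime) {n m l : ℕ} (hn : n ∈ p.smoothNumbers)
    (hm : m ∈ p.smoothNumbers) (hl : l ∈ p.smoothNumbers) (h : n = m + p * l) :
    (mk (rankOne ((p : ℚ) * n)) : GrothendieckWitt ℚ ⧸ smoothSubgroup p) =
      mk (rankOne ((p : ℚ) * m)) := by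
  have hp0 : (p : ℚ) ≠ 0 := Nat.cast_ne_zero.2 hp.ne_zero
  have hn0 : (n : ℚ) ≠ 0 := Nat.cast_ne_zero.2 hn.1
  have hm0 : (m : ℚ) ≠ 0 := Nat.cast_ne_zero.2 hm.1
  have hl0 : (l : ℚ) ≠ 0 := Nat.cast_ne_zero.2 hl.1
  have key := rankOne_add_rankOne (b := (p : ℚ) * n) 1 p (mul_ne_zero hp0 hm0) hl0
    (mul_ne_zero hp0 hn0) (by rw [h]; push_cast; ring)
  rw [show (p : ℚ) * m * l * (p * n) = ((m * l * n : ℕ) : ℚ) * p ^ 2 by push_cast; ring,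
    rankOne_mul_sq _ hp0] at key
  simpa only [mk_add, mk_rankOne_natCast_eq_zero hl, mk_rankOne_natCast_eq_zero
    (Nat.mul_mem_smoothNumbers (Nat.mul_mem_smoothNumbers hm hl) hn), add_zero]
    using (congrArg (mk (s := smoothSubgroup p)) key).symm

theorem mod_mem_smoothNumbers (hp : p.Prime) {n : ℕ} (hn : n ∈ p.smoothNumbers) :
    n % p ∈ p.smoothNumbers :=
  Nat.mem_smoothNumbers_of_lt
    (Nat.emod_pos_of_not_dvd fun h => (Nat.mem_smoothNumbers'.1 hn p hp h).false)
    (Nat.mod_lt n hp.pos)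

theorem mk_rankOne_mul_mod_of_lt (hp : p.Prime) {m n t : ℕ} (hm0 : 0 < m) (hm : m < p)
    (hn0 : 0 < n) (hn : n < p) (ht : t ∈ p.smoothNumbers) :
    (mk (rankOne ((p : ℚ) * (m * n * t : ℕ))) : GrothendieckWitt ℚ ⧸ smoothSubgroup p) =
      mk (rankOne ((p : ℚ) * (m * n % p * t : ℕ))) := by
  have hmn := Nat.mul_mem_smoothNumbers (Nat.mem_smoothNumbers_of_lt hm0 hm)
    (Nat.mem_smoothNumbers_of_lt hn0 hn)
  rcases Nat.eq_zero_or_pos (m * n / p) with hl | hl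
  · rw [Nat.mod_eq_of_lt ((Nat.div_eq_zero_iff_lt hp.pos).1 hl)]
  refine mk_rankOne_mul_eq hp (Nat.mul_mem_smoothNumbers hmn ht)
    (Nat.mul_mem_smoothNumbers (mod_mem_smoothNumbers hp hmn) ht) (l := m * n / p * t)
    (Nat.mul_mem_smoothNumbers (Nat.mem_smoothNumbers_of_lt hl ?_) ht) ?_
  · exact Nat.div_lt_of_lt_mul (Nat.mul_lt_mul'' hm hn)
  · rw [← mul_assoc, ← add_mul, Nat.mod_add_div]

theorem mk_rankOne_mul_mod (hp : p.Prime) {n t : ℕ} (hn : n ∈ p.smoothNumbers)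
    (ht : t ∈ p.smoothNumbers) :
    (mk (rankOne ((p : ℚ) * (n * t : ℕ))) : GrothendieckWitt ℚ ⧸ smoothSubgroup p) =
      mk (rankOne ((p : ℚ) * (n % p * t : ℕ))) := by
  induction n using induction_on_primes generalizing t with
  | zero => exact absurd rfl hn.1
  | one => rw [Nat.mod_eq_of_lt hp.one_lt]
  | prime_mul q n hq ih =>
    have hn' : n ∈ p.smoothNumbers := Nat.mem_smoothNumbers_of_dvd hn (dvd_mul_left n q)
    have hqp : q < p := Nat.mem_smoothNumbers'.1 hn q hq (dvd_mul_right q n)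
    have hnp := mod_mem_smoothNumbers hp hn'
    rw [mul_comm q n, mul_assoc, ih hn'
      (Nat.mul_mem_smoothNumbers (Nat.mem_smoothNumbers_of_lt hq.pos hqp) ht), ← mul_assoc,
      mk_rankOne_mul_mod_of_lt hp hnp.1.bot_lt (Nat.mod_lt n hp.pos) hq.pos hqp ht, Nat.mod_mul_mod]

theorem residueSymbol_natCast (hp : p.Prime) {n : ℕ} (hn : n ∈ p.smoothNumbers) :
    residueSymbol p n = mk (rankOne ((p : ℚ) * n)) := by
  have := mk_rankOne_mul_mod hp hn (Nat.mem_smoothNumbers_of_lt one_pos hp.one_lt)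
  rw [mul_one, mul_one] at this
  rw [residueSymbol, ZMod.val_natCast, this]

variable [hp : Fact p.Prime]

theorem val_mem_smoothNumbers {a : ZMod p} (ha : a ≠ 0) : a.val ∈ p.smoothNumbers :=
  Nat.mem_smoothNumbers_of_lt ((ZMod.val_ne_zero a).2 ha).bot_lt (ZMod.val_lt a)

theorem residueSymbol_add_neg {a : ZMod p} (ha : a ≠ 0) :
    residueSymbol p a + residueSymbol p (-a) = 0 := by
  have : NeZero a := ⟨ha⟩
  have hp0 : (p : ℚ) ≠ 0 := Nat.cast_ne_zero.2 hp.out.ne_zero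
  have hv := val_mem_smoothNumbers ha
  have hv' := val_mem_smoothNumbers (neg_ne_zero.2 ha)
  have hsum : (a.val : ℚ) + (-a).val = p := by
    rw [ZMod.val_neg_of_ne_zero, ← Nat.cast_add, Nat.add_sub_cancel' (ZMod.val_le a)]
  have key := rankOne_add_rankOne (b := ((1 : ℕ) : ℚ)) (p : ℚ)⁻¹ (p : ℚ)⁻¹
    (mul_ne_zero hp0 (Nat.cast_ne_zero.2 hv.1)) (mul_ne_zero hp0 (Nat.cast_ne_zero.2 hv'.1))
    (by simp) (by field_simp; simpa using hsum)
  rw [show (p : ℚ) * a.val * (p * (-a).val) * (1 : ℕ) = ((a.val * (-a).val : ℕ) : ℚ) * p ^ 2 by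
    push_cast; ring, rankOne_mul_sq _ hp0] at key
  rw [residueSymbol, residueSymbol, ← mk_add, key, mk_add, mk_rankOne_natCast_eq_zero
    (Nat.mem_smoothNumbers_of_lt one_pos hp.out.one_lt),
    mk_rankOne_natCast_eq_zero (Nat.mul_mem_smoothNumbers hv hv'), add_zero]

theorem residueSymbol_mul_sq {a b : ZMod p} (ha : a ≠ 0) (hb : b ≠ 0) :
    residueSymbol p (a * b ^ 2) = residueSymbol p a := by
  have hb' := val_mem_smoothNumbers hb
  have : a * b ^ 2 = ((a.val * b.val ^ 2 : ℕ) : ZMod p) := by simp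
  rw [this, residueSymbol_natCast hp.out, residueSymbol, Nat.cast_mul, Nat.cast_pow, ← mul_assoc,
    rankOne_mul_sq _ (Nat.cast_ne_zero.2 hb'.1)]
  exact Nat.mul_mem_smoothNumbers (val_mem_smoothNumbers ha)
    (pow_two b.val ▸ Nat.mul_mem_smoothNumbers hb' hb')

theorem residueSymbol_add_of_val_add_lt {a b : ZMod p} (ha : a ≠ 0) (hb : b ≠ 0)
    (h : a.val + b.val < p) :
    residueSymbol p a + residueSymbol p b =
      residueSymbol p (a + b) + residueSymbol p (a * b * (a + b)) := by
  have hp0 : (p : ℚ) ≠ 0 := Nat.cast_ne_zero.2 hp.out.ne_zero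
  have ha' := val_mem_smoothNumbers ha
  have hb' := val_mem_smoothNumbers hb
  have hab' : a.val + b.val ∈ p.smoothNumbers :=
    Nat.mem_smoothNumbers_of_lt (Nat.add_pos_left ha'.1.bot_lt _) h
  have key := rankOne_add_rankOne (b := (p : ℚ) * (a.val + b.val : ℕ)) 1 1
    (mul_ne_zero hp0 (Nat.cast_ne_zero.2 ha'.1)) (mul_ne_zero hp0 (Nat.cast_ne_zero.2 hb'.1))
    (mul_ne_zero hp0 (Nat.cast_ne_zero.2 hab'.1)) (by push_cast; ring)
  rw [show (p : ℚ) * a.val * (p * b.val) * (p * (a.val + b.val : ℕ)) =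
    p * (a.val * b.val * (a.val + b.val) : ℕ) * p ^ 2 by push_cast; ring,
    rankOne_mul_sq _ hp0] at key
  have hsum : a + b = ((a.val + b.val : ℕ) : ZMod p) := by simp
  have hprod : a * b * (a + b) = ((a.val * b.val * (a.val + b.val) : ℕ) : ZMod p) := by simp
  rw [hprod, hsum, residueSymbol_natCast hp.out hab', residueSymbol_natCast hp.out
    (Nat.mul_mem_smoothNumbers (Nat.mul_mem_smoothNumbers ha' hb') hab'), ← mk_add, ← key]
  rfl

theorem isWittSymbol_residueSymbol : IsWittSymbol (residueSymbol p) where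
  mul_sq := residueSymbol_mul_sq
  add_neg := residueSymbol_add_neg
  add {a b} ha hb hab := by
    rcases lt_trichotomy (a.val + b.val) p with h | h | h
    · exact residueSymbol_add_of_val_add_lt ha hb h
    · exact absurd (by simpa using congrArg (Nat.cast : ℕ → ZMod p) h) hab
    -- Both sides are odd in `(a, b)`, and the representatives of `-a` and `-b` are small.
    · have : NeZero a := ⟨ha⟩
      have : NeZero b := ⟨hb⟩
      have hneg {c : ZMod p} (hc : c ≠ 0) : residueSymbol p (-c) = -residueSymbol p c :=
        eq_neg_of_add_eq_zero_right (residueSymbol_add_neg hc)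
      have := residueSymbol_add_of_val_add_lt (neg_ne_zero.2 ha) (neg_ne_zero.2 hb) (by
        have := ZMod.val_lt a
        have := ZMod.val_lt b
        rw [ZMod.val_neg_of_ne_zero, ZMod.val_neg_of_ne_zero]
        omega)
      rw [← neg_add, neg_mul_neg, mul_neg, hneg ha, hneg hb, hneg hab,
        hneg (mul_ne_zero (mul_ne_zero ha hb) hab), ← neg_add, ← neg_add] at this
      exact neg_injective this

theorem hyperbolic_mem_smoothSubgroup : hyperbolic ℚ ∈ smoothSubgroup p := by
  have h (u : ℤ) (hu : u.natAbs = 1) : u.natAbs ∈ p.smoothNumbers :=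
    hu ▸ Nat.mem_smoothNumbers_of_lt one_pos hp.out.one_lt
  simpa [hyperbolic] using add_mem (rankOne_mem_smoothSubgroup (h 1 rfl))
    (rankOne_mem_smoothSubgroup (h (-1) rfl))

theorem mk_mem_closure_residueSymbol {x : GrothendieckWitt ℚ} (hx : x ∈ smoothSubgroup (p + 1)) :
    (mk x : GrothendieckWitt ℚ ⧸ smoothSubgroup p) ∈
      AddSubgroup.closure (residueSymbol p '' {0}ᶜ) := by
  have hp0 : (p : ℚ) ≠ 0 := Nat.cast_ne_zero.2 hp.out.ne_zero
  have natCast_mem {n : ℕ} (hn : n ∈ (p + 1).smoothNumbers) :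
      (mk (rankOne (n : ℚ)) : GrothendieckWitt ℚ ⧸ smoothSubgroup p) ∈
        AddSubgroup.closure (residueSymbol p '' {0}ᶜ) := by
    obtain ⟨⟨e, m, hm⟩, h⟩ := (Nat.equivProdNatSmoothNumbers hp.out).surjective ⟨n, hn⟩
    obtain rfl : p ^ e * m = n := congrArg Subtype.val h
    obtain ⟨j, rfl | rfl⟩ := Nat.even_or_odd' e
    · rw [show ((p ^ (2 * j) * m : ℕ) : ℚ) = m * ((p : ℚ) ^ j) ^ 2 by push_cast; ring,
        rankOne_mul_sq _ (pow_ne_zero j hp0), mk_rankOne_natCast_eq_zero hm]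
      exact zero_mem _
    · rw [show ((p ^ (2 * j + 1) * m : ℕ) : ℚ) = p * m * ((p : ℚ) ^ j) ^ 2 by push_cast; ring,
        rankOne_mul_sq _ (pow_ne_zero j hp0), ← residueSymbol_natCast hp.out hm]
      refine AddSubgroup.subset_closure ⟨m, fun h => ?_, rfl⟩
      exact (Nat.mem_smoothNumbers'.1 hm p hp.out ((ZMod.natCast_eq_zero_iff m p).1 h)).false
  refine (AddSubgroup.closure_le (K := (AddSubgroup.closure (residueSymbol p '' {0}ᶜ)).comap
    (mk' (smoothSubgroup p)))).2 ?_ hx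
  rintro _ ⟨u, hu, rfl⟩
  obtain ⟨n, rfl | rfl⟩ := u.eq_nat_or_neg
  · simpa using natCast_mem hu
  · rw [Set.mem_ofPred_eq, Int.natAbs_neg, Int.natAbs_natCast] at hu
    have h := rankOne_add_rankOne_neg (Nat.cast_ne_zero.2 hu.1 : (n : ℚ) ≠ 0)
    have hneg : (mk (rankOne (-(n : ℚ))) : GrothendieckWitt ℚ ⧸ smoothSubgroup p) =
        -mk (rankOne (n : ℚ)) := by
      rw [eq_sub_of_add_eq' h, mk_sub, (eq_zero_iff _).2 hyperbolic_mem_smoothSubgroup, zero_sub]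
    simpa [hneg] using natCast_mem hu

omit hp in
theorem exists_add_nsmul_hyperbolic_eq {x : GrothendieckWitt ℚ} (hx : x ∈ smoothSubgroup p) :
    ∃ (k n : ℕ) (τ : Fin n → ℤ), (∀ i, (τ i).natAbs ∈ p.smoothNumbers) ∧
      x + k • hyperbolic ℚ = ∑ i, rankOne (τ i : ℚ) := by
  induction hx using AddSubgroup.closure_induction_right with
  | zero => exact ⟨0, 0, Fin.elim0, fun i => i.elim0, by simp⟩
  | add_right x _ y hy ih =>
    obtain ⟨u, hu, rfl⟩ := hy
    obtain ⟨k, n, τ, hτ, h⟩ := ih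
    refine ⟨k, n + 1, Fin.cons u τ, Fin.forall_fin_succ.2 ⟨hu, hτ⟩, ?_⟩
    simp only [Fin.sum_univ_succ, Fin.cons_zero, Fin.cons_succ, ← h]
    abel
  | add_neg_cancel x _ y hy ih =>
    obtain ⟨u, hu, rfl⟩ := hy
    obtain ⟨k, n, τ, hτ, h⟩ := ih
    refine ⟨k + 1, n + 1, Fin.cons (-u) τ, Fin.forall_fin_succ.2
      ⟨by simpa using hu, hτ⟩, ?_⟩
    have hu0 : (u : ℚ) ≠ 0 := Int.cast_ne_zero.2 (Int.natAbs_ne_zero.1 hu.1)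
    simp only [Fin.sum_univ_succ, Fin.cons_zero, Fin.cons_succ, ← h, add_smul, one_smul,
      ← rankOne_add_rankOne_neg hu0, Int.cast_neg]
    abel

theorem exists_anisotropic_add_nsmul_hyperbolic_eq {x : GrothendieckWitt ℚ}
    (hx : x ∈ smoothSubgroup (p + 1)) :
    ∃ (k m n : ℕ) (b : Fin m → ZMod p) (τ : Fin n → ℤ),
      (∀ y : Fin m → ZMod p, ∑ i, b i * y i ^ 2 = 0 → y = 0) ∧
      (∀ i, (τ i).natAbs ∈ p.smoothNumbers) ∧
      x + k • hyperbolic ℚ = ∑ i, rankOne ((p : ℚ) * (b i).val) + ∑ i, rankOne (τ i : ℚ) := by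
  obtain ⟨m, b, hb, h⟩ := isWittSymbol_residueSymbol.exists_anisotropic_of_mem_closure
    (mk_mem_closure_residueSymbol hx)
  have hmem : x - ∑ i, rankOne ((p : ℚ) * (b i).val) ∈ smoothSubgroup p := by
    rw [← eq_zero_iff, mk_sub, h, sub_eq_zero]
    exact (map_sum (mk' (smoothSubgroup p)) _ _).symm
  obtain ⟨k, n, τ, hτ, h⟩ := exists_add_nsmul_hyperbolic_eq hmem
  exact ⟨k, m, n, b, τ, hb, hτ, by rw [← h]; abel⟩

end ResidueSymbol

/-! ### Lattices in quadratic spaces -/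

section DualLattice

open Module

variable {R K V : Type*} [CommRing R] [Field K] [Algebra R K] [AddCommGroup V] [Module R V]
  [Module K V] [IsScalarTower R K V] {B : LinearMap.BilinForm K V} {N₁ N₂ L Z : Submodule R V}

theorem mem_dualSubmodule_iff {x : V} :
    x ∈ B.dualSubmodule L ↔ ∀ y ∈ L, ∃ r : R, algebraMap R K r = B x y := by
  simp only [LinearMap.BilinForm.mem_dualSubmodule, Submodule.mem_one]

theorem dualSubmodule_anti (h : N₁ ≤ N₂) : B.dualSubmodule N₂ ≤ B.dualSubmodule N₁ :=
  fun _ hx y hy => hx y (h hy)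

theorem dualSubmodule_sup :
    B.dualSubmodule (N₁ ⊔ N₂) = B.dualSubmodule N₁ ⊓ B.dualSubmodule N₂ := by
  refine le_antisymm (le_inf (dualSubmodule_anti le_sup_left) (dualSubmodule_anti le_sup_right)) ?_
  rintro x ⟨h₁, h₂⟩ _ hy
  obtain ⟨a, ha, b, hb, rfl⟩ := Submodule.mem_sup.1 hy
  rw [map_add]
  exact add_mem (h₁ a ha) (h₂ b hb)

theorem isLattice_span_range {ι : Type*} [Finite ι] (b : Basis ι K V) :
    Submodule.IsLattice K (Submodule.span R (Set.range b)) where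
  fg := Submodule.fg_span (Set.finite_range b)
  span_eq_top := by rw [Submodule.span_span_of_tower, b.span_eq]

variable [IsDomain R] [IsPrincipalIdealRing R] [IsFractionRing R K]

theorem exists_basis_span_eq (N : Submodule R V) [Submodule.IsLattice K N] :
    ∃ (n : ℕ) (b : Basis (Fin n) K V), N = Submodule.span R (Set.range b) := by
  have := IsTorsionFree.trans_faithfulSMul R K V
  have := Submodule.IsLattice.finite K N
  let b := finBasis R N
  have hb : ⇑(b.extendOfIsLattice K) = N.subtype ∘ b :=
    funext fun i => Basis.extendOfIsLattice_apply K b i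
  exact ⟨_, b.extendOfIsLattice K, by
    rw [hb, Set.range_comp, ← Submodule.map_span, b.span_eq, Submodule.map_top,
      Submodule.range_subtype]⟩

theorem isLattice_dualSubmodule (hB : B.Nondegenerate) [Submodule.IsLattice K L] :
    Submodule.IsLattice K (B.dualSubmodule L) := by
  obtain ⟨n, b, rfl⟩ := exists_basis_span_eq (K := K) L
  rw [LinearMap.BilinForm.dualSubmodule_span_of_basis B hB b]
  exact isLattice_span_range _

theorem dualSubmodule_dualSubmodule (hB : B.Nondegenerate) (hs : B.IsSymm)
    [Submodule.IsLattice K L] : B.dualSubmodule (B.dualSubmodule L) = L := by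
  obtain ⟨n, b, rfl⟩ := exists_basis_span_eq (K := K) L
  exact LinearMap.BilinForm.dualSubmodule_dualSubmodule_of_basis B hB hs b

theorem dualSubmodule_inf (hB : B.Nondegenerate) (hs : B.IsSymm) [Submodule.IsLattice K N₁]
    [Submodule.IsLattice K N₂] :
    B.dualSubmodule (N₁ ⊓ N₂) = B.dualSubmodule N₁ ⊔ B.dualSubmodule N₂ := by
  have := isLattice_dualSubmodule hB (L := N₁)
  have := isLattice_dualSubmodule hB (L := N₂)
  rw [← dualSubmodule_dualSubmodule hB hs (L := B.dualSubmodule N₁ ⊔ B.dualSubmodule N₂),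
    dualSubmodule_sup, dualSubmodule_dualSubmodule hB hs, dualSubmodule_dualSubmodule hB hs]

/-- By double duality `hw` says that `w` lies in `L + Z`. -/
theorem exists_algebraMap_eq_of_mem_dualSubmodule (hB : B.Nondegenerate) (hs : B.IsSymm)
    [Submodule.IsLattice K L] [Submodule.IsLattice K Z] (hL : B.dualSubmodule L = L)
    (hZ : Z ≤ B.dualSubmodule Z) {w : V} (hwZ : w ∈ B.dualSubmodule Z)
    (hw : w ∈ B.dualSubmodule (L ⊓ B.dualSubmodule Z)) :
    ∃ r : R, algebraMap R K r = B w w := by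
  have := isLattice_dualSubmodule hB (L := Z)
  obtain ⟨l, hl, z, hz, rfl⟩ := Submodule.mem_sup.1
    ((by rw [dualSubmodule_inf hB hs, hL, dualSubmodule_dualSubmodule hB hs] at hw; exact hw) :
      w ∈ L ⊔ Z)
  have hlZ : l ∈ B.dualSubmodule Z := by
    simpa using Submodule.sub_mem _ hwZ (hZ hz)
  obtain ⟨r, hr⟩ := mem_dualSubmodule_iff.1 hw l ⟨hl, hlZ⟩
  obtain ⟨t, ht⟩ := mem_dualSubmodule_iff.1 hwZ z hz
  exact ⟨r + t, by rw [map_add, hr, ht, ← map_add]⟩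

end DualLattice

section EvenUnimodular

open Module LinearMap.BilinForm

variable {V : Type*} [AddCommGroup V] [Module ℚ V] {B : LinearMap.BilinForm ℚ V}
  {L L' Λ : Submodule ℤ V}

variable (B) in
/-- `L` is an even unimodular lattice for the form `B`: it is a full lattice, equals its dual, and
all its vectors have even norm. -/
structure IsEvenUnimodular (L : Submodule ℤ V) : Prop where
  isLattice : Submodule.IsLattice ℚ L
  dual_eq : B.dualSubmodule L = L
  even : ∀ x ∈ L, ∃ n : ℤ, B x x = 2 * n

theorem intCast_smul_mem (n : ℤ) {x : V} (hx : x ∈ L) : (n : ℚ) • x ∈ L := by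
  rw [Int.cast_smul_eq_zsmul]
  exact L.smul_mem n hx

/-- The preimage of a lattice under a self-isometry, as a lattice. -/
def isometryComap (g : B.IsometryEquiv B) (L : Submodule ℤ V) : Submodule ℤ V :=
  L.comap ((g : V ≃ₗ[ℚ] V).toLinearMap.restrictScalars ℤ)

theorem mem_isometryComap {g : B.IsometryEquiv B} {x : V} : x ∈ isometryComap g L ↔ g x ∈ L :=
  Iff.rfl

namespace IsEvenUnimodular

theorem exists_int_eq (h : IsEvenUnimodular B L) {x y : V} (hx : x ∈ L) (hy : y ∈ L) :
    ∃ n : ℤ, (n : ℚ) = B x y :=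
  mem_dualSubmodule_iff.1 (h.dual_eq.symm ▸ hx) y hy

theorem mem_of_forall (h : IsEvenUnimodular B L) {x : V}
    (hx : ∀ y ∈ L, ∃ n : ℤ, (n : ℚ) = B x y) : x ∈ L :=
  h.dual_eq ▸ mem_dualSubmodule_iff.2 hx

theorem exists_le [FiniteDimensional ℚ V] (hB : B.Nondegenerate) (hs : B.IsSymm)
    (h : IsEvenUnimodular B L) {N : Submodule ℤ V} [Submodule.IsLattice ℚ N]
    (hint : N ≤ B.dualSubmodule N) (heven : ∀ x ∈ N, ∃ n : ℤ, B x x = 2 * n) :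
    ∃ L', IsEvenUnimodular B L' ∧ N ≤ L' := by
  have := h.isLattice
  have := isLattice_dualSubmodule hB (L := N)
  refine ⟨N ⊔ (B.dualSubmodule N ⊓ L), ⟨inferInstance, ?_, ?_⟩, le_sup_left⟩
  · rw [dualSubmodule_sup, dualSubmodule_inf hB hs, dualSubmodule_dualSubmodule hB hs, h.dual_eq,
      inf_comm, sup_inf_assoc_of_le _ hint, inf_comm]
  · intro x hx
    obtain ⟨y, hy, z, ⟨hzN, hzL⟩, rfl⟩ := Submodule.mem_sup.1 hx
    obtain ⟨a, ha⟩ := heven y hy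
    obtain ⟨b, hb⟩ := h.even z hzL
    obtain ⟨c, hc⟩ := mem_dualSubmodule_iff.1 hzN y hy
    rw [eq_intCast] at hc
    refine ⟨a + b + c, ?_⟩
    simp only [map_add, LinearMap.add_apply, ha, hb, hs.eq y z, ← hc]
    push_cast
    ring

theorem comap (h : IsEvenUnimodular B L) (g : B.IsometryEquiv B) :
    IsEvenUnimodular B (isometryComap g L) where
  isLattice := by
    have := h.isLattice
    have hmap : isometryComap g L =
        L.map ((g.symm : V ≃ₗ[ℚ] V).toLinearMap.restrictScalars ℤ) :=
      Submodule.comap_equiv_eq_map_symm ((g : V ≃ₗ[ℚ] V).restrictScalars ℤ) L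
    refine ⟨hmap ▸ (Submodule.IsLattice.fg (A := ℚ) (M := L)).map _, ?_⟩
    rw [hmap]
    change Submodule.span ℚ ((g.symm : V ≃ₗ[ℚ] V).toLinearMap '' (L : Set V)) = ⊤
    rw [← Submodule.map_span, Submodule.IsLattice.span_eq_top, Submodule.map_top,
      LinearEquiv.range]
  dual_eq := by
    have hsurj (y : V) : ∃ x, g x = y := (g : V ≃ₗ[ℚ] V).surjective y
    ext x
    rw [mem_dualSubmodule_iff, mem_isometryComap]
    refine ⟨fun hx => h.mem_of_forall fun y hy => ?_, fun hx y hy => ?_⟩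
    · obtain ⟨y, rfl⟩ := hsurj y
      simpa using hx y hy
    · simpa using h.exists_int_eq hx hy
  even x hx := by simpa using h.even (g x) hx

end IsEvenUnimodular

theorem exists_forall_eq_intCast_mul [Submodule.IsLattice ℚ L] {φ : V →ₗ[ℚ] ℚ} (hφ : φ ≠ 0) :
    ∃ f ∈ L, φ f ≠ 0 ∧ ∀ y ∈ L, ∃ n : ℤ, φ y = n * φ f := by
  have hfg : (L.map (φ.restrictScalars ℤ)).FG :=
    (Submodule.IsLattice.fg (A := ℚ) (M := L)).map _
  let I : FractionalIdeal (nonZeroDivisors ℤ) ℚ := ⟨_, FractionalIdeal.isFractional_of_fg hfg⟩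
  obtain ⟨q, hq⟩ : ∃ q : ℚ, L.map (φ.restrictScalars ℤ) = Submodule.span ℤ {q} :=
    (FractionalIdeal.isPrincipal I).1
  obtain ⟨f, hf, rfl⟩ : q ∈ L.map (φ.restrictScalars ℤ) :=
    hq ▸ Submodule.mem_span_singleton_self q
  have hn (y : V) (hy : y ∈ L) : ∃ n : ℤ, φ y = n * φ f := by
    obtain ⟨n, hn⟩ := Submodule.mem_span_singleton.1
      (hq ▸ ⟨y, hy, rfl⟩ : φ y ∈ Submodule.span ℤ {φ f})
    exact ⟨n, by rw [← hn, zsmul_eq_mul]; rfl⟩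
  refine ⟨f, hf, fun h0 => hφ (LinearMap.ext_on (Submodule.IsLattice.span_eq_top (M := L)) ?_), hn⟩
  intro y hy
  obtain ⟨n, hy⟩ := hn y hy
  simpa [h0] using hy

theorem IsEvenUnimodular.exists_hyperbolic_pair (hB : B.Nondegenerate) (hs : B.IsSymm)
    (h : IsEvenUnimodular B L) {v : V} (hv : v ≠ 0) (hvv : B v v = 0) :
    ∃ (r : ℚ) (f : V), r ≠ 0 ∧ r • v ∈ L ∧ f ∈ L ∧ B (r • v) f = 1 ∧ B f f = 0 := by
  have := h.isLattice
  have hBv : B v ≠ 0 := fun h0 => hv (hB.1 v fun y => by rw [h0, LinearMap.zero_apply])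
  obtain ⟨f, hf, hq, hmul⟩ := exists_forall_eq_intCast_mul (L := L) hBv
  have hmem : (B v f)⁻¹ • v ∈ L := h.mem_of_forall fun y hy => by
    obtain ⟨n, hn⟩ := hmul y hy
    exact ⟨n, by simp [hn]; field_simp⟩
  obtain ⟨n, hn⟩ := h.even f hf
  refine ⟨(B v f)⁻¹, f - (n : ℚ) • (B v f)⁻¹ • v, inv_ne_zero hq, hmem,
    L.sub_mem hf (intCast_smul_mem n hmem), by simp [hvv, hq], ?_⟩
  simp only [map_sub, map_smul, LinearMap.sub_apply, LinearMap.smul_apply, smul_eq_mul, hvv, hn,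
    hs.eq f v]
  field_simp
  ring

/-- The isometry that scales a hyperbolic pair `e, f` by `r, r⁻¹` and fixes its orthogonal
complement. -/
def hyperbolicScaling (hs : B.IsSymm) {e f : V} (he : B e e = 0) (hf : B f f = 0)
    (hef : B e f = 1) {r : ℚ} (hr : r ≠ 0) : B.IsometryEquiv B where
  toFun v := v + (B f v * (r - 1)) • e + (B e v * (r⁻¹ - 1)) • f
  invFun v := v + (B f v * (r⁻¹ - 1)) • e + (B e v * (r - 1)) • f
  map_add' x y := by simp only [map_add]; module
  map_smul' c x := by simp only [map_smul, smul_eq_mul, RingHom.id_apply]; module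
  left_inv v := by
    simp only [map_add, map_smul, smul_eq_mul, he, hf, hef, hs.eq f e]
    match_scalars <;> field_simp <;> ring
  right_inv v := by
    simp only [map_add, map_smul, smul_eq_mul, he, hf, hef, hs.eq f e]
    match_scalars <;> field_simp <;> ring
  map_app' x y := by
    simp only [map_add, map_smul, LinearMap.add_apply, LinearMap.smul_apply, smul_eq_mul, he, hf,
      hef, hs.eq f e, hs.eq x e, hs.eq x f]
    field_simp
    ring

theorem hyperbolicScaling_apply (hs : B.IsSymm) {e f : V} (he : B e e = 0) (hf : B f f = 0)
    (hef : B e f = 1) {r : ℚ} (hr : r ≠ 0) (v : V) :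
    hyperbolicScaling hs he hf hef hr v = v + (B f v * (r - 1)) • e + (B e v * (r⁻¹ - 1)) • f :=
  rfl

/-- The neighbour of `L` along an isotropic vector `v`, as the preimage of `L` under an isometry. -/
theorem IsEvenUnimodular.exists_isometryEquiv_apply_mem (hB : B.Nondegenerate) (hs : B.IsSymm)
    (h : IsEvenUnimodular B L) {v : V} (hv : v ≠ 0) (hvv : B v v = 0) :
    ∃ g : B.IsometryEquiv B, g v ∈ L ∧ ∀ f ∈ L, B v f = 1 → ∀ w ∈ L,
      (∃ n : ℤ, (n : ℚ) = B v w) → g w ∈ L := by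
  obtain ⟨r, f, hr, hrv, hf, hrf, hff⟩ := h.exists_hyperbolic_pair hB hs hv hvv
  have hrr : B (r • v) (r • v) = 0 := by simp [hvv]
  refine ⟨hyperbolicScaling hs hrr hff hrf hr, ?_, fun f' hf' hvf' w hw ⟨n, hn⟩ => ?_⟩
  · have hfv : B f v * r = 1 := by simpa [hs.eq f v, mul_comm] using hrf
    simpa [hyperbolicScaling_apply, hvv, smul_smul, mul_sub, sub_mul, hfv, sub_smul] using hrv
  · obtain ⟨k, hk⟩ := h.exists_int_eq hrv hf'
    obtain ⟨l, hl⟩ := h.exists_int_eq hf hw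
    obtain rfl : (k : ℚ) = r := by simpa [hvf'] using hk
    have hcoeff : B ((k : ℚ) • v) w * ((k : ℚ)⁻¹ - 1) = ((n * (1 - k) : ℤ) : ℚ) := by
      simp only [map_smul, LinearMap.smul_apply, smul_eq_mul, ← hn]
      push_cast
      field_simp
    rw [hyperbolicScaling_apply, ← hl, hcoeff]
    exact L.add_mem (L.add_mem hw (by exact_mod_cast intCast_smul_mem (l * (k - 1)) hrv))
      (intCast_smul_mem _ hf)

theorem IsEvenUnimodular.exists_isotropic_of_not_le (hs : B.IsSymm) (hΛ : IsEvenUnimodular B Λ)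
    {e f : V} (he : B e e = 0) (hf : B f f = 0) (hef : B e f = 1) (heΛ : e ∈ Λ) (hfΛ : f ∈ Λ)
    (heL : e ∈ L) (hfL : f ∈ L) (hle : ¬Λ ≤ L) :
    ∃ v ∈ Λ, v ∉ L ∧ B v v = 0 ∧ B v f = 1 := by
  obtain ⟨x, hxΛ, hxL⟩ := SetLike.not_le_iff_exists.1 hle
  obtain ⟨a, ha⟩ := hΛ.exists_int_eq hxΛ heΛ
  obtain ⟨b, hb⟩ := hΛ.exists_int_eq hxΛ hfΛ
  obtain ⟨c, hc⟩ := hΛ.even x hxΛ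
  let y : V := ((1 - b : ℤ) : ℚ) • e - ((c + (1 - b) * a : ℤ) : ℚ) • f
  have hy {N : Submodule ℤ V} (heN : e ∈ N) (hfN : f ∈ N) : y ∈ N :=
    N.sub_mem (intCast_smul_mem _ heN) (intCast_smul_mem _ hfN)
  refine ⟨x + y, Λ.add_mem hxΛ (hy heΛ hfΛ), fun h => hxL ?_, ?_, ?_⟩
  · simpa using L.sub_mem h (hy heL hfL)
  · simp only [y, map_add, map_sub, map_smul, LinearMap.add_apply, LinearMap.sub_apply,
      LinearMap.smul_apply, smul_eq_mul, he, hf, hef, hs.eq f e, hs.eq e x, hs.eq f x, ← ha, ← hb,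
      hc]
    push_cast
    ring
  · simp [y, hf, hef, ← hb]

theorem IsEvenUnimodular.exists_le_isometryComap_of_mem (hB : B.Nondegenerate) (hs : B.IsSymm)
    (hΛ : IsEvenUnimodular B Λ) {e f : V} (he : B e e = 0) (hf : B f f = 0) (hef : B e f = 1)
    (heΛ : e ∈ Λ) (hfΛ : f ∈ Λ) (hL : IsEvenUnimodular B L) (heL : e ∈ L) (hfL : f ∈ L) :
    ∃ g : B.IsometryEquiv B, Λ ≤ isometryComap g L := by
  have := hΛ.isLattice
  have hwf : WellFoundedGT (Submodule ℤ Λ) := inferInstance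
  induction hN : L.comap Λ.subtype using hwf.wf.induction generalizing L with
  | _ N ih =>
    subst hN
    by_cases hle : Λ ≤ L
    · exact ⟨.refl B, hle⟩
    obtain ⟨v, hvΛ, hvL, hvv, hvf⟩ :=
      hΛ.exists_isotropic_of_not_le hs he hf hef heΛ hfΛ heL hfL hle
    have hv : v ≠ 0 := fun h => hvL (h ▸ L.zero_mem)
    obtain ⟨g, hgv, hg⟩ := hL.exists_isometryEquiv_apply_mem hB hs hv hvv
    have hgL (w : V) (hwΛ : w ∈ Λ) (hwL : w ∈ L) : g w ∈ L :=
      hg f hfL hvf w hwL (hΛ.exists_int_eq hvΛ hwΛ)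
    have hlt : L.comap Λ.subtype < (isometryComap g L).comap Λ.subtype :=
      SetLike.lt_iff_le_and_exists.2
        ⟨fun w hw => hgL w w.2 hw, ⟨v, hvΛ⟩, hgv, hvL⟩
    obtain ⟨g', hg'⟩ := ih _ hlt (hL.comap g) (hgL e heΛ heL) (hgL f hfΛ hfL) rfl
    exact ⟨g'.trans g, hg'⟩

theorem IsEvenUnimodular.exists_le_isometryComap (hB : B.Nondegenerate) (hs : B.IsSymm)
    (hΛ : IsEvenUnimodular B Λ) (hL : IsEvenUnimodular B L) {v : V} (hv : v ≠ 0)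
    (hvv : B v v = 0) : ∃ g : B.IsometryEquiv B, Λ ≤ isometryComap g L := by
  obtain ⟨r, f, hr, he, hf, hef, hff⟩ := hΛ.exists_hyperbolic_pair hB hs hv hvv
  set e := r • v
  have hee : B e e = 0 := by simp [e, hvv]
  have hfe : B f e = 1 := by rw [hs.eq f e, hef]
  obtain ⟨g₁, hg₁, -⟩ := hL.exists_isometryEquiv_apply_mem hB hs (smul_ne_zero hr hv) hee
  obtain ⟨g₂, hg₂, hg₂'⟩ := (hL.comap g₁).exists_isometryEquiv_apply_mem hB hs (v := f)
    (by rintro rfl; simp at hef) hff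
  obtain ⟨g₃, hg₃⟩ := hΛ.exists_le_isometryComap_of_mem hB hs hee hff hef he hf
    ((hL.comap g₁).comap g₂) (hg₂' e hg₁ hfe e hg₁ ⟨1, by simp [hfe]⟩) hg₂
  exact ⟨(g₃.trans g₂).trans g₁, hg₃⟩

end EvenUnimodular

section GramLattice

open Module LinearMap.BilinForm

variable {ι κ V : Type*} [Fintype ι] [DecidableEq ι] [Fintype κ] [DecidableEq κ]

theorem IsCongruent.exists_basis_toMatrix_eq {R : Type*} [CommRing R] {A : Matrix ι ι R}
    {C : Matrix κ κ R} (h : IsCongruent A C) :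
    ∃ b : Basis κ R (ι → R), toMatrix b (Matrix.toBilin' A) = C := by
  obtain ⟨P, Q, hPQ, hQP, rfl⟩ := h
  refine ⟨.ofEquivFun (toLin'OfInv hPQ hQP), ?_⟩
  ext i j
  have hb (k : κ) : Basis.ofEquivFun (toLin'OfInv hPQ hQP) k = P *ᵥ Pi.single k 1 := by
    simp [Basis.coe_ofEquivFun, toLin'OfInv]
  rw [toMatrix_apply, hb, hb, toBilin'_apply', ← vecMul_transpose, ← dotProduct_mulVec,
    mulVec_mulVec, mulVec_mulVec, single_one_dotProduct, mulVec_single_one,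
    col_apply]

theorem apply_eq_sum_of_toMatrix_eq_diagonal {R : Type*} [CommRing R] [AddCommGroup V] [Module R V]
    {B : LinearMap.BilinForm R V} {b : Basis ι R V} {d : ι → R} (hb : toMatrix b B = diagonal d)
    (x y : V) : B x y = ∑ i, d i * b.repr x i * b.repr y i := by
  rw [apply_eq_dotProduct_toMatrix_mulVec b, hb, dotProduct]
  exact Finset.sum_congr rfl fun i _ => by rw [mulVec_diagonal]; ring

theorem apply_basis_eq_of_toMatrix_eq_diagonal {R : Type*} [CommRing R] [AddCommGroup V]
    [Module R V] {B : LinearMap.BilinForm R V} {b : Basis ι R V} {d : ι → R}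
    (hb : toMatrix b B = diagonal d) (x : V) (i : ι) : B x (b i) = d i * b.repr x i := by
  rw [apply_eq_sum_of_toMatrix_eq_diagonal hb]
  simp [Finsupp.single_apply]

variable [AddCommGroup V] [Module ℚ V] {B : LinearMap.BilinForm ℚ V} {L : Submodule ℤ V}

theorem span_le_dualSubmodule_span {s : Set V} (h : ∀ x ∈ s, ∀ y ∈ s, ∃ n : ℤ, (n : ℚ) = B x y) :
    Submodule.span ℤ s ≤ B.dualSubmodule (Submodule.span ℤ s) := by
  refine Submodule.span_le.2 fun x hx y hy => ?_
  induction hy using Submodule.span_induction with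
  | mem y hy => exact Submodule.mem_one.2 (h x hx y hy)
  | zero => exact (map_zero (B x)).symm ▸ zero_mem _
  | add y z _ _ hy hz => exact (map_add (B x) y z).symm ▸ add_mem hy hz
  | smul n y _ hy => exact (map_zsmul (B x) n y).symm ▸ Submodule.smul_mem _ n hy

theorem exists_eq_two_mul_of_mem_span (hs : B.IsSymm) {s : Set V}
    (hint : ∀ x ∈ s, ∀ y ∈ s, ∃ n : ℤ, (n : ℚ) = B x y)
    (heven : ∀ x ∈ s, ∃ n : ℤ, B x x = 2 * n) {x : V} (hx : x ∈ Submodule.span ℤ s) :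
    ∃ n : ℤ, B x x = 2 * n := by
  induction hx using Submodule.span_induction with
  | mem x hx => exact heven x hx
  | zero => exact ⟨0, by simp⟩
  | add x y hx hy ihx ihy =>
    obtain ⟨a, ha⟩ := ihx
    obtain ⟨b, hb⟩ := ihy
    obtain ⟨c, hc⟩ := mem_dualSubmodule_iff.1 (span_le_dualSubmodule_span hint hx) y hy
    refine ⟨a + b + c, ?_⟩
    simp only [map_add, LinearMap.add_apply, ha, hb, hs.eq y x, ← hc, eq_intCast]
    push_cast
    ring
  | smul n x _ ih =>
    obtain ⟨a, ha⟩ := ih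
    refine ⟨n ^ 2 * a, ?_⟩
    simp only [map_zsmul, LinearMap.smul_apply, ha, zsmul_eq_mul]
    push_cast
    ring

variable {A : Matrix ι ι ℤ} {b : Basis ι ℚ V}

theorem apply_eq_intCast_of_toMatrix_eq (hb : toMatrix b B = A.map (Int.castRingHom ℚ)) (i j : ι) :
    B (b i) (b j) = A i j := by
  rw [← toMatrix_apply, hb, map_apply, eq_intCast]

theorem forall_mem_range_exists_intCast_eq (hb : toMatrix b B = A.map (Int.castRingHom ℚ)) :
    ∀ x ∈ Set.range b, ∀ y ∈ Set.range b, ∃ n : ℤ, (n : ℚ) = B x y := by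
  rintro _ ⟨i, rfl⟩ _ ⟨j, rfl⟩
  exact ⟨A i j, (apply_eq_intCast_of_toMatrix_eq hb i j).symm⟩

theorem forall_mem_range_exists_eq_two_mul (hb : toMatrix b B = A.map (Int.castRingHom ℚ))
    (heven : ∀ i, 2 ∣ A i i) : ∀ x ∈ Set.range b, ∃ n : ℤ, B x x = 2 * n := by
  rintro _ ⟨i, rfl⟩
  obtain ⟨n, hn⟩ := heven i
  exact ⟨n, by simp [apply_eq_intCast_of_toMatrix_eq hb, hn]⟩

theorem dualSubmodule_span_range_eq (hb : toMatrix b B = A.map (Int.castRingHom ℚ))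
    (hA : IsUnit A.det) :
    B.dualSubmodule (Submodule.span ℤ (Set.range b)) = Submodule.span ℤ (Set.range b) := by
  refine le_antisymm (fun x hx => (b.mem_span_iff_repr_mem ℤ x).2 fun j => ?_)
    (span_le_dualSubmodule_span (forall_mem_range_exists_intCast_eq hb))
  have hxb (i : ι) : ∃ n : ℤ, (n : ℚ) = B x (b i) :=
    mem_dualSubmodule_iff.1 hx (b i) (Submodule.subset_span ⟨i, rfl⟩)
  choose n hn using hxb
  have hxA : b.repr x ᵥ* A.map (Int.castRingHom ℚ) = Int.castRingHom ℚ ∘ n := by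
    ext i
    change _ = (n i : ℚ)
    rw [hn, apply_eq_dotProduct_toMatrix_mulVec b, dotProduct_mulVec, hb, b.repr_self,
      Finsupp.single_eq_pi_single, dotProduct_single_one]
  have hAA : A.map (Int.castRingHom ℚ) * A⁻¹.map (Int.castRingHom ℚ) = 1 := by
    rw [← Matrix.map_mul, mul_nonsing_inv A hA, Matrix.map_one _ (map_zero _) (map_one _)]
  refine ⟨(n ᵥ* A⁻¹) j, ?_⟩
  calc ((n ᵥ* A⁻¹) j : ℚ) = (Int.castRingHom ℚ ∘ n ᵥ* A⁻¹.map (Int.castRingHom ℚ)) j :=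
        RingHom.map_vecMul (Int.castRingHom ℚ) _ _ _
    _ = b.repr x j := by rw [← hxA, vecMul_vecMul, hAA, vecMul_one]

theorem isEvenUnimodular_span_range (hs : B.IsSymm)
    (hb : toMatrix b B = A.map (Int.castRingHom ℚ)) (hA : IsUnit A.det) (heven : ∀ i, 2 ∣ A i i) :
    IsEvenUnimodular B (Submodule.span ℤ (Set.range b)) where
  isLattice := isLattice_span_range b
  dual_eq := dualSubmodule_span_range_eq hb hA
  even _ := exists_eq_two_mul_of_mem_span hs (forall_mem_range_exists_intCast_eq hb)
    (forall_mem_range_exists_eq_two_mul hb heven)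

end GramLattice

section VanDerBlij

open Module LinearMap.BilinForm

variable {ι V : Type*} [Fintype ι] [DecidableEq ι] [AddCommGroup V] [Module ℚ V]
  {B : LinearMap.BilinForm ℚ V} {L : Submodule ℤ V} {b : Basis ι ℚ V} {τ : ι → ℤ}

omit [Fintype ι] in
theorem diagonal_map_intCast (τ : ι → ℤ) :
    (diagonal τ).map (Int.castRingHom ℚ) = diagonal fun i => (τ i : ℚ) :=
  diagonal_map (map_zero _)

omit [Fintype ι] [DecidableEq ι] in
theorem exists_repr_eq_intCast {z : V} (hz : z ∈ Submodule.span ℤ (Set.range b)) :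
    ∃ n : ι → ℤ, ∀ i, b.repr z i = n i := by
  choose n hn using (b.mem_span_iff_repr_mem ℤ z).1 hz
  exact ⟨n, fun i => (hn i).symm⟩

theorem IsEvenUnimodular.mem_dualSubmodule_of_repr_eq_half (h : IsEvenUnimodular B L)
    (hb : toMatrix b B = diagonal fun i => (τ i : ℚ)) {w : V} (hw : ∀ i, b.repr w i = 1 / 2) :
    w ∈ B.dualSubmodule (L ⊓ Submodule.span ℤ (Set.range b)) := by
  refine mem_dualSubmodule_iff.2 fun y ⟨hyL, hyI⟩ => ?_
  obtain ⟨n, hn⟩ := exists_repr_eq_intCast hyI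
  obtain ⟨k, hk⟩ := h.even y hyL
  have hsum : ∑ i, τ i * n i ^ 2 = 2 * k := by
    simp only [apply_eq_sum_of_toMatrix_eq_diagonal hb, hn, mul_assoc, ← sq] at hk
    exact_mod_cast hk
  have hmod (i : ι) : (2 : ℤ) ∣ τ i * n i ^ 2 - τ i * n i := by
    obtain ⟨c, hc⟩ := (Int.even_mul_pred_self (n i)).two_dvd
    exact ⟨τ i * c, by linear_combination τ i * hc⟩
  obtain ⟨c, hc⟩ : (2 : ℤ) ∣ ∑ i, τ i * n i := by
    have := Finset.dvd_sum (s := Finset.univ) fun i _ => hmod i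
    rw [Finset.sum_sub_distrib, hsum] at this
    exact (dvd_sub_right (dvd_mul_right 2 k)).1 this
  refine ⟨c, ?_⟩
  have hc' : (∑ i, τ i * n i : ℚ) = 2 * c := by exact_mod_cast hc
  simp only [apply_eq_sum_of_toMatrix_eq_diagonal hb, hn, hw, eq_intCast]
  rw [← mul_right_inj' (two_ne_zero' ℚ), ← hc', Finset.mul_sum]
  exact Finset.sum_congr rfl fun i _ => by ring

/-- **Van der Blij's lemma**, for a space that also contains an odd unimodular diagonal lattice:
half the sum of the orthogonal basis is half a characteristic vector of the latter. -/
theorem IsEvenUnimodular.eight_dvd_sum (hB : B.Nondegenerate) (hs : B.IsSymm)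
    (h : IsEvenUnimodular B L) (hτ : ∀ i, IsUnit (τ i))
    (hb : toMatrix b B = diagonal fun i => (τ i : ℚ)) : 8 ∣ ∑ i, τ i := by
  have := h.isLattice
  have : Submodule.IsLattice ℚ (Submodule.span ℤ (Set.range b)) := isLattice_span_range b
  have hI := dualSubmodule_span_range_eq (hb.trans (diagonal_map_intCast τ).symm)
    (by simpa [IsUnit.prod_univ_iff] using hτ)
  obtain ⟨w, hw⟩ : ∃ w, ∀ i, b.repr w i = 1 / 2 := ⟨b.equivFun.symm fun _ => 1 / 2, by simp⟩
  have hwL := h.mem_dualSubmodule_of_repr_eq_half hb hw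
  rw [dualSubmodule_inf hB hs, h.dual_eq, hI] at hwL
  obtain ⟨l, hl, z, hz, rfl⟩ := Submodule.mem_sup.1 hwL
  obtain ⟨n, hn⟩ := exists_repr_eq_intCast hz
  obtain ⟨k, hk⟩ := h.even l hl
  have hl' (i : ι) : b.repr l i = 1 / 2 - n i := by
    rw [← hn, ← hw i, map_add, Finsupp.add_apply, add_sub_cancel_right]
  have hsum : ∑ i, τ i * (1 - 2 * n i) ^ 2 = 8 * k := by
    simp only [apply_eq_sum_of_toMatrix_eq_diagonal hb, hl'] at hk
    have : (∑ i, τ i * (1 - 2 * n i) ^ 2 : ℚ) = 8 * k := by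
      rw [show (8 * k : ℚ) = 4 * (2 * k) by ring, ← hk, Finset.mul_sum]
      exact Finset.sum_congr rfl fun i _ => by ring
    exact_mod_cast this
  have hmod (i : ι) : (8 : ℤ) ∣ τ i * (1 - 2 * n i) ^ 2 - τ i := by
    obtain ⟨c, hc⟩ := (Int.even_mul_pred_self (n i)).two_dvd
    exact ⟨τ i * c, by linear_combination 4 * τ i * hc⟩
  have := Finset.dvd_sum (s := Finset.univ) fun i _ => hmod i
  rw [Finset.sum_sub_distrib, hsum] at this
  exact (dvd_sub_right (dvd_mul_right 8 k)).1 this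

end VanDerBlij

section Realisation

open Module LinearMap.BilinForm

variable {ι κ : Type*} [Fintype ι] [DecidableEq ι] [Fintype κ] [DecidableEq κ]
  {G : Matrix ι ι ℤ} {N : Matrix κ κ ℤ}

theorem isSymm_toBilin'_map_intCast (hG : G.IsSymm) :
    (Matrix.toBilin' (G.map (Int.castRingHom ℚ))).IsSymm :=
  isSymm_toBilin'_iff_isSymm.2 (hG.map _)

theorem nondegenerate_toBilin'_map_intCast (hG : G.det ≠ 0) :
    (Matrix.toBilin' (G.map (Int.castRingHom ℚ))).Nondegenerate :=
  nondegenerate_toBilin'_of_det_ne_zero' _ (det_map_intCast_ne_zero hG)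

theorem toMatrix_basisFun_toBilin' (A : Matrix ι ι ℚ) :
    toMatrix (Pi.basisFun ℚ ι) (Matrix.toBilin' A) = A := by
  rw [toMatrix_basisFun, toMatrix'_toBilin']

theorem toBilin'_map_intCast_apply (y z : ι → ℤ) :
    Matrix.toBilin' (G.map (Int.castRingHom ℚ)) (fun i => (y i : ℚ)) (fun i => (z i : ℚ)) =
      (y ⬝ᵥ G *ᵥ z : ℤ) := by
  rw [toBilin'_apply', ← eq_intCast (Int.castRingHom ℚ), RingHom.map_dotProduct]
  exact congrArg _ (funext fun i => (RingHom.map_mulVec (Int.castRingHom ℚ) G z i).symm)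

/-- An isotropic even lattice rationally equivalent to an even unimodular one embeds into it: it has
an even unimodular overlattice, which is unique up to isometry. -/
theorem exists_transpose_mul_mul_eq (hG : G.IsSymm) (hGeven : ∀ i, 2 ∣ G i i)
    (hGuni : IsUnit G.det) (hN : ∀ i, 2 ∣ N i i) {i₀ : κ} (hi₀ : N i₀ i₀ = 0)
    (h : IsCongruent (G.map (Int.castRingHom ℚ)) (N.map (Int.castRingHom ℚ))) :
    ∃ Y : Matrix ι κ ℤ, Yᵀ * G * Y = N := by
  set B := Matrix.toBilin' (G.map (Int.castRingHom ℚ))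
  have hs : B.IsSymm := isSymm_toBilin'_map_intCast hG
  have hB : B.Nondegenerate := nondegenerate_toBilin'_map_intCast hGuni.ne_zero
  have hL := isEvenUnimodular_span_range hs (toMatrix_basisFun_toBilin' _) hGuni hGeven
  obtain ⟨c, hc⟩ := h.exists_basis_toMatrix_eq
  have := isLattice_span_range (R := ℤ) c
  obtain ⟨Λ, hΛ, hcΛ⟩ := hL.exists_le hB hs
    (span_le_dualSubmodule_span (forall_mem_range_exists_intCast_eq hc))
    fun _ => exists_eq_two_mul_of_mem_span hs (forall_mem_range_exists_intCast_eq hc)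
      (forall_mem_range_exists_eq_two_mul hc hN)
  obtain ⟨g, hg⟩ := hΛ.exists_le_isometryComap hB hs hL (c.ne_zero i₀)
    (by rw [apply_eq_intCast_of_toMatrix_eq hc, hi₀, Int.cast_zero])
  have hgc (k : κ) : ∃ n : ι → ℤ, ∀ i, g (c k) i = n i :=
    exists_repr_eq_intCast (b := Pi.basisFun ℚ ι) (hg (hcΛ (Submodule.subset_span ⟨k, rfl⟩)))
  choose Y hY using hgc
  refine ⟨of fun i k => Y k i, ?_⟩
  ext j k
  rw [← Int.cast_inj (α := ℚ), ← apply_eq_intCast_of_toMatrix_eq hc, ← g.map_app, funext (hY j),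
    funext (hY k), toBilin'_map_intCast_apply, Matrix.mul_assoc]
  rfl

end Realisation

/-! ### Rational classes of unimodular lattices -/

section PrimeExclusion

open Module LinearMap.BilinForm

theorem ne_zero_of_forall_sum_mul_sq_eq_zero {K κ : Type*} [Field K] [Fintype κ] {b : κ → K}
    (hb : ∀ y : κ → K, ∑ i, b i * y i ^ 2 = 0 → y = 0) (i : κ) : b i ≠ 0 := fun h => by
  classical
  have hsum : ∑ k, b k * (Pi.single i 1 : κ → K) k ^ 2 = 0 := Finset.sum_eq_zero fun k _ => by
    obtain rfl | hk := eq_or_ne k i <;> simp [*]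
  simpa using congrFun (hb _ hsum) i

variable {p : ℕ}

theorem intCast_ne_zero_of_zmod {a : ℤ} (ha : (a : ZMod p) ≠ 0) : (a : ℚ) ≠ 0 :=
  Int.cast_ne_zero.2 fun h => ha (by rw [h, Int.cast_zero])

variable {κ ν V : Type*} [Fintype κ] [Fintype ν] [AddCommGroup V] [Module ℚ V]
  [Fact p.Prime] {b : κ → ℤ} {τ : ν → ℤ}

theorem dvd_of_sum_div_eq_intCast
    (hb : ∀ y : κ → ZMod p, ∑ i, (b i : ZMod p) * y i ^ 2 = 0 → y = 0)
    (hτ : ∀ i, (τ i : ZMod p) ≠ 0) {x : κ → ℤ} {y : ν → ℤ} {n : ℤ}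
    (h : ∑ i, (x i : ℚ) ^ 2 / (p * b i) + ∑ i, (y i : ℚ) ^ 2 / τ i = n) (i : κ) :
    (p : ℤ) ∣ x i := by
  have hb0 := ne_zero_of_forall_sum_mul_sq_eq_zero hb
  have hp0 : (p : ℚ) ≠ 0 := Nat.cast_ne_zero.2 (Fact.out : p.Prime).ne_zero
  obtain ⟨D, hD, hbD, hτD⟩ : ∃ D : ℤ, (D : ZMod p) ≠ 0 ∧ (∀ i, b i ∣ D) ∧ ∀ i, τ i ∣ D :=
    ⟨(∏ i, b i) * ∏ i, τ i, by simp [Finset.prod_ne_zero_iff, hb0, hτ],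
      fun i => (Finset.dvd_prod_of_mem _ (Finset.mem_univ i)).mul_right _,
      fun i => (Finset.dvd_prod_of_mem _ (Finset.mem_univ i)).mul_left _⟩
  choose e he using hbD
  choose f hf using hτD
  have he' (i : κ) : (e i * x i ^ 2 : ℚ) = p * D * ((x i : ℚ) ^ 2 / (p * b i)) := by
    rw [show (D : ℚ) = b i * e i by exact_mod_cast he i]
    field_simp [intCast_ne_zero_of_zmod (hb0 i)]
  have hf' (i : ν) : (f i * y i ^ 2 : ℚ) = D * ((y i : ℚ) ^ 2 / τ i) := by
    rw [show (D : ℚ) = τ i * f i by exact_mod_cast hf i]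
    field_simp [intCast_ne_zero_of_zmod (hτ i)]
  have hint : ∑ i, e i * x i ^ 2 + p * ∑ i, f i * y i ^ 2 = p * (D * n) := by
    rw [← Int.cast_inj (α := ℚ)]
    push_cast
    simp only [he', hf', ← Finset.mul_sum, ← h]
    ring
  have hmod : ∑ i, (e i : ZMod p) * x i ^ 2 = 0 := by
    simpa using congrArg (Int.cast : ℤ → ZMod p) hint
  have hsum : ∑ i, (b i : ZMod p) * (x i / b i) ^ 2 = 0 := by
    rw [← mul_right_inj' hD, mul_zero, ← hmod, Finset.mul_sum]
    refine Finset.sum_congr rfl fun i _ => ?_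
    rw [show (D : ZMod p) = b i * e i by simpa using congrArg (Int.cast : ℤ → ZMod p) (he i)]
    field_simp [hb0 i]
  rw [← ZMod.intCast_zmod_eq_zero_iff_dvd]
  simpa [hb0] using congrFun (hb _ hsum) i

omit [Fintype ν] in
theorem intCast_sumElim_ne_zero
    (hb : ∀ y : κ → ZMod p, ∑ i, (b i : ZMod p) * y i ^ 2 = 0 → y = 0)
    (hτ : ∀ i, (τ i : ZMod p) ≠ 0) (i : κ ⊕ ν) :
    ((Sum.elim (fun i => p * b i) τ i : ℤ) : ℚ) ≠ 0 := by
  have hp0 : (p : ℚ) ≠ 0 := Nat.cast_ne_zero.2 (Fact.out : p.Prime).ne_zero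
  obtain i | i := i
  · simpa [hp0] using
      Int.cast_ne_zero.1 (intCast_ne_zero_of_zmod (ne_zero_of_forall_sum_mul_sq_eq_zero hb i))
  · exact intCast_ne_zero_of_zmod (hτ i)

variable [DecidableEq κ] [DecidableEq ν] {B : LinearMap.BilinForm ℚ V} {β : Basis (κ ⊕ ν) ℚ V}

theorem dvd_of_apply_basis_eq_intCast
    (hb : ∀ y : κ → ZMod p, ∑ i, (b i : ZMod p) * y i ^ 2 = 0 → y = 0)
    (hτ : ∀ i, (τ i : ZMod p) ≠ 0)
    (hβ : toMatrix β B = diagonal fun i => ((Sum.elim (fun i => p * b i) τ i : ℤ) : ℚ)) {y : V}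
    {x : κ ⊕ ν → ℤ} {n : ℤ} (hx : ∀ i, (x i : ℚ) = B y (β i)) (hn : (n : ℚ) = B y y) (j : κ) :
    (p : ℤ) ∣ x (.inl j) := by
  have hsq (i : κ ⊕ ν) : (Sum.elim (fun i => p * b i) τ i : ℤ) * β.repr y i * β.repr y i =
      (x i : ℚ) ^ 2 / (Sum.elim (fun i => p * b i) τ i : ℤ) := by
    rw [hx, apply_basis_eq_of_toMatrix_eq_diagonal hβ]
    field_simp [intCast_sumElim_ne_zero hb hτ i]
  refine dvd_of_sum_div_eq_intCast hb hτ (x := x ∘ .inl) (y := x ∘ .inr) (n := n) ?_ j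
  rw [apply_eq_sum_of_toMatrix_eq_diagonal hβ] at hn
  simp only [hsq, Fintype.sum_sum_type, Sum.elim_inl, Sum.elim_inr] at hn
  simp [hn]

/-- Otherwise `p⁻¹ • β j`, for `j : κ`, would have integral products with all vectors of `L` that
have integral products with `β`, and hence integral norm. -/
theorem isEmpty_of_dualSubmodule_eq {L : Submodule ℤ V} (hB : B.Nondegenerate) (hs : B.IsSymm)
    [Submodule.IsLattice ℚ L] (hL : B.dualSubmodule L = L)
    (hb : ∀ y : κ → ZMod p, ∑ i, (b i : ZMod p) * y i ^ 2 = 0 → y = 0)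
    (hτ : ∀ i, (τ i : ZMod p) ≠ 0)
    (hβ : toMatrix β B = diagonal fun i => ((Sum.elim (fun i => p * b i) τ i : ℤ) : ℚ)) :
    IsEmpty κ := by
  refine ⟨fun j => ?_⟩
  have hp0 : (p : ℚ) ≠ 0 := Nat.cast_ne_zero.2 (Fact.out : p.Prime).ne_zero
  have := isLattice_span_range (R := ℤ) β
  have hBβ := apply_basis_eq_of_toMatrix_eq_diagonal hβ
  have hwZ : (p : ℚ)⁻¹ • β (.inl j) ∈ B.dualSubmodule (Submodule.span ℤ (Set.range β)) := by
    refine mem_dualSubmodule_iff.2 fun y hy => ?_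
    obtain ⟨n, hn⟩ := exists_repr_eq_intCast hy
    refine ⟨b j * n (.inl j), ?_⟩
    simp only [map_smul, LinearMap.smul_apply, hs.eq _ y, hBβ, hn]
    simp [hp0, mul_assoc]
  have hw : (p : ℚ)⁻¹ • β (.inl j) ∈
      B.dualSubmodule (L ⊓ B.dualSubmodule (Submodule.span ℤ (Set.range β))) := by
    refine mem_dualSubmodule_iff.2 fun y ⟨hyL, hyZ⟩ => ?_
    obtain ⟨n, hn⟩ := mem_dualSubmodule_iff.1 (hL.symm ▸ hyL : y ∈ B.dualSubmodule L) y hyL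
    choose x hx using fun i => mem_dualSubmodule_iff.1 hyZ (β i) (Submodule.subset_span ⟨i, rfl⟩)
    obtain ⟨c, hc⟩ := dvd_of_apply_basis_eq_intCast hb hτ hβ hx hn j
    refine ⟨c, ?_⟩
    simp only [map_smul, LinearMap.smul_apply, hs.eq _ y, ← hx, hc]
    simp [hp0]
  obtain ⟨r, hr⟩ := exists_algebraMap_eq_of_mem_dualSubmodule hB hs hL
    (span_le_dualSubmodule_span (forall_mem_range_exists_intCast_eq
      (hβ.trans (diagonal_map_intCast _).symm))) hwZ hw
  have hbr : (b j : ℚ) = p * r := by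
    simp only [map_smul, LinearMap.smul_apply, hBβ, β.repr_self, Finsupp.single_eq_same,
      Sum.elim_inl, smul_eq_mul, eq_intCast] at hr
    rw [hr]
    push_cast
    field_simp
  have hbr' : b j = p * r := by exact_mod_cast hbr
  exact ne_zero_of_forall_sum_mul_sq_eq_zero hb j (by simp [hbr'])

end PrimeExclusion

section UnimodularClass

open GrothendieckWitt

theorem intCast_zmod_ne_zero_of_mem_smoothNumbers {p : ℕ} (hp : p.Prime) {u : ℤ}
    (hu : u.natAbs ∈ p.smoothNumbers) : (u : ZMod p) ≠ 0 := by
  rw [Ne, ZMod.intCast_zmod_eq_zero_iff_dvd, Int.natCast_dvd]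
  exact hp.coprime_iff_not_dvd.1 (hp.smoothNumbers_coprime hu)

theorem rankOne_mem_smoothSubgroup_of_lt {a : ℚ} (ha : a ≠ 0) {N : ℕ}
    (hN : (a.num * a.den).natAbs < N) : rankOne a ∈ smoothSubgroup N := by
  have hden : (a.den : ℚ) ≠ 0 := Nat.cast_ne_zero.2 a.den_ne_zero
  have h : ((a.num * a.den : ℤ) : ℚ) = a * a.den ^ 2 := by
    push_cast
    rw [← Rat.mul_den_eq_num]
    ring
  rw [← rankOne_mul_sq a hden, ← h]
  refine rankOne_mem_smoothSubgroup (Nat.mem_smoothNumbers_of_lt (Int.natAbs_pos.2 ?_) hN)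
  exact mul_ne_zero (Rat.num_ne_zero.2 ha) (Int.natCast_ne_zero.2 a.den_ne_zero)

theorem eq_of_mem_smoothSubgroup_zero {x : GrothendieckWitt ℚ} (hx : x ∈ smoothSubgroup 0) :
    x = posIndex x • rankOne 1 + negIndex x • rankOne (-1) := by
  induction hx using AddSubgroup.closure_induction with
  | mem _ hx =>
    obtain ⟨u, hu, rfl⟩ := hx
    rw [Nat.smoothNumbers_zero] at hu
    obtain rfl | rfl := Int.natAbs_eq_iff.1 hu <;> simp [posIndex_rankOne, negIndex_rankOne]
  | zero => simp
  | add x y _ _ ihx ihy =>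
    conv_lhs => rw [ihx, ihy]
    simp only [map_add, add_smul]
    abel
  | neg x _ ih =>
    conv_lhs => rw [ih]
    simp only [map_neg, neg_smul]
    abel

variable {ι : Type*} [Fintype ι] [DecidableEq ι] {A : Matrix ι ι ℤ}

theorem exists_ofMatrix_mem_smoothSubgroup {C : Matrix ι ι ℚ} (hC : C.IsSymm) (hdet : C.det ≠ 0) :
    ∃ N, ofMatrix C ∈ smoothSubgroup N := by
  obtain ⟨a, ha, hCa⟩ := exists_isCongruent_diagonal_ne_zero hC hdet
  refine ⟨(Finset.univ.sup fun i => ((a i).num * (a i).den).natAbs) + 1, ?_⟩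
  rw [ofMatrix_eq_sum ha hCa]
  exact sum_mem fun i _ => rankOne_mem_smoothSubgroup_of_lt (ha i) (Nat.lt_succ_of_le
    (Finset.le_sup (f := fun i => ((a i).num * (a i).den).natAbs) (Finset.mem_univ i)))

theorem exists_unimodular_ofMatrix_eq_add_nsmul_hyperbolic (hA : A.IsSymm) (hdet : IsUnit A.det)
    (k : ℕ) :
    ∃ A' : Matrix (ι ⊕ Fin k ⊕ Fin k) (ι ⊕ Fin k ⊕ Fin k) ℤ, A'.IsSymm ∧ IsUnit A'.det ∧
      ofMatrix (A'.map (Int.castRingHom ℚ)) =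
        ofMatrix (A.map (Int.castRingHom ℚ)) + k • hyperbolic ℚ := by
  let d : Fin k ⊕ Fin k → ℤ := Sum.elim (fun _ => 1) fun _ => -1
  have hd : IsUnit (diagonal d).det := by simpa [d] using isUnit_one.neg.pow k
  have hds : (diagonal d).IsSymm := isSymm_diagonal d
  refine ⟨fromBlocks A 0 0 (diagonal d), hA.fromBlocks transpose_zero hds,
    by simpa using hdet.mul hd, ?_⟩
  rw [fromBlocks_map, Matrix.map_zero _ (map_zero _), Matrix.map_zero _ (map_zero _),
    ofMatrix_fromBlocks (hA.map _) (det_map_intCast_ne_zero hdet.ne_zero) (hds.map _)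
      (det_map_intCast_ne_zero hd.ne_zero), diagonal_map_intCast,
    ofMatrix_eq_sum (by simp [d]) (.refl _)]
  simp [d, hyperbolic]

/-- Milnor's descent: the anisotropic part of the residue at `p` of a unimodular form vanishes. -/
theorem ofMatrix_mem_smoothSubgroup_of_succ {p : ℕ} [hp : Fact p.Prime] (hA : A.IsSymm)
    (hdet : IsUnit A.det) (h : ofMatrix (A.map (Int.castRingHom ℚ)) ∈ smoothSubgroup (p + 1)) :
    ofMatrix (A.map (Int.castRingHom ℚ)) ∈ smoothSubgroup p := by
  obtain ⟨k, m, n, b, τ, hb, hτ, hsum⟩ := exists_anisotropic_add_nsmul_hyperbolic_eq h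
  obtain ⟨A', hA', hdet', hAk⟩ := exists_unimodular_ofMatrix_eq_add_nsmul_hyperbolic hA hdet k
  have hτ' (i : Fin n) := intCast_zmod_ne_zero_of_mem_smoothNumbers hp.out (hτ i)
  let b' : Fin m → ℤ := fun i => (b i).val
  have hb' (i : Fin m) : (b' i : ZMod p) = b i := by simp [b']
  let d : Fin m ⊕ Fin n → ℤ := Sum.elim (fun i => p * b' i) τ
  replace hb : ∀ y : Fin m → ZMod p, ∑ i, (b' i : ZMod p) * y i ^ 2 = 0 → y = 0 := by
    simpa only [hb'] using hb
  have hd : ∀ i, (d i : ℚ) ≠ 0 := intCast_sumElim_ne_zero hb hτ'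
  obtain ⟨a, ha, hAa⟩ := exists_isCongruent_diagonal_ne_zero (hA'.map (Int.castRingHom ℚ))
    (det_map_intCast_ne_zero hdet'.ne_zero)
  have hA'd : IsCongruent (A'.map (Int.castRingHom ℚ)) (diagonal fun i => (d i : ℚ)) := by
    refine hAa.trans ((sum_rankOne_eq_iff ha hd).1 ?_)
    rw [← ofMatrix_eq_sum ha hAa, hAk, hsum]
    simp [d, b']
  obtain ⟨β, hβ⟩ := hA'd.exists_basis_toMatrix_eq
  have := isLattice_span_range (R := ℤ) (Pi.basisFun ℚ (ι ⊕ Fin k ⊕ Fin k))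
  have hm : IsEmpty (Fin m) := isEmpty_of_dualSubmodule_eq
    (nondegenerate_toBilin'_map_intCast hdet'.ne_zero) (isSymm_toBilin'_map_intCast hA')
    (dualSubmodule_span_range_eq (toMatrix_basisFun_toBilin' _) hdet') hb hτ' hβ
  rw [Fintype.sum_empty, zero_add, ← eq_sub_iff_add_eq] at hsum
  exact hsum ▸ sub_mem (sum_mem fun i _ => rankOne_mem_smoothSubgroup (hτ i))
    (nsmul_mem hyperbolic_mem_smoothSubgroup k)

theorem ofMatrix_mem_smoothSubgroup_zero (hA : A.IsSymm) (hdet : IsUnit A.det) :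
    ofMatrix (A.map (Int.castRingHom ℚ)) ∈ smoothSubgroup 0 := by
  obtain ⟨N, hN⟩ := exists_ofMatrix_mem_smoothSubgroup (hA.map (Int.castRingHom ℚ))
    (det_map_intCast_ne_zero hdet.ne_zero)
  induction N with
  | zero => exact hN
  | succ p ih =>
    by_cases hp : p.Prime
    · have : Fact p.Prime := ⟨hp⟩
      exact ih (ofMatrix_mem_smoothSubgroup_of_succ hA hdet hN)
    · exact ih (by rwa [smoothSubgroup, Nat.smoothNumbers_succ hp] at hN)

theorem ofMatrix_eq_sigPlus_nsmul_add {n : ℕ} {G : Matrix (Fin n) (Fin n) ℤ} (hG : G.IsSymm)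
    (hdet : IsUnit G.det) : ofMatrix (G.map (Int.castRingHom ℚ)) =
      sigPlus G • rankOne 1 + sigMinus G • rankOne (-1) := by
  have h := eq_of_mem_smoothSubgroup_zero (ofMatrix_mem_smoothSubgroup_zero hG hdet)
  rwa [← sigPlus_eq_posIndex hG hdet.ne_zero, ← sigMinus_eq_negIndex hG hdet.ne_zero,
    natCast_zsmul, natCast_zsmul] at h

theorem eight_dvd_sigPlus_sub_sigMinus {n : ℕ} {G : Matrix (Fin n) (Fin n) ℤ} (hG : G.IsSymm)
    (heven : ∀ i, 2 ∣ G i i) (hdet : IsUnit G.det) :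
    (8 : ℤ) ∣ sigPlus G - sigMinus G := by
  let τ : Fin (sigPlus G) ⊕ Fin (sigMinus G) → ℤ := Sum.elim (fun _ => 1) fun _ => -1
  have hτ (i) : IsUnit (τ i) := by cases i <;> simp [τ]
  have hτ' (i) : (τ i : ℚ) ≠ 0 := Int.cast_ne_zero.2 (hτ i).ne_zero
  obtain ⟨a, ha, hGa⟩ := exists_isCongruent_diagonal_ne_zero (hG.map (Int.castRingHom ℚ))
    (det_map_intCast_ne_zero hdet.ne_zero)
  have hGτ : IsCongruent (G.map (Int.castRingHom ℚ)) (diagonal fun i => (τ i : ℚ)) := by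
    refine hGa.trans ((sum_rankOne_eq_iff ha hτ').1 ?_)
    rw [← ofMatrix_eq_sum ha hGa, ofMatrix_eq_sigPlus_nsmul_add hG hdet]
    simp [τ]
  obtain ⟨β, hβ⟩ := hGτ.exists_basis_toMatrix_eq
  have h := IsEvenUnimodular.eight_dvd_sum (nondegenerate_toBilin'_map_intCast hdet.ne_zero)
    (isSymm_toBilin'_map_intCast hG) (isEvenUnimodular_span_range (isSymm_toBilin'_map_intCast hG)
      (toMatrix_basisFun_toBilin' _) hdet heven) hτ hβ
  simpa [τ, sub_eq_add_neg] using h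

end UnimodularClass

/-! ### Primitive embeddings -/

section NormTrick

open Polynomial

theorem exists_aeval_add_eq (f : ℤ[X]) (g : ℤ) : ∃ u v : ℤ[X], C g ∣ u - f ∧
    ∀ t x : ℝ, x ^ 2 = g → aeval (t + x) f = aeval t u + x * aeval t v := by
  induction f using Polynomial.induction_on with
  | C a => exact ⟨C a, 0, by simp, by simp⟩
  | add p q hp hq =>
    obtain ⟨u, v, hu, h⟩ := hp
    obtain ⟨u', v', hu', h'⟩ := hq
    refine ⟨u + u', v + v', add_sub_add_comm u u' p q ▸ dvd_add hu hu', fun t x hx => ?_⟩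
    simp only [map_add, h t x hx, h' t x hx]
    ring
  | monomial n a ih =>
    obtain ⟨u, v, ⟨w, hw⟩, h⟩ := ih
    refine ⟨X * u + C g * v, u + X * v, ⟨X * w + v, by linear_combination X * hw⟩,
      fun t x hx => ?_⟩
    rw [pow_succ, ← mul_assoc, map_mul, h t x hx]
    simp only [map_mul, map_add, aeval_X, eq_intCast, map_intCast]
    linear_combination aeval t v * hx

/-- The product of the `2 ^ l.length` numbers `t ± √g₁ ± ⋯ ± √gₖ`, where `l = [g₁, …, gₖ]`. -/
noncomputable def sqrtSignProd : List ℕ → ℝ → ℝ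
  | [], t => t
  | g :: l, t => sqrtSignProd l (t + √g) * sqrtSignProd l (t - √g)

theorem sqrtSignProd_perm {l l' : List ℕ} (h : l.Perm l') : sqrtSignProd l = sqrtSignProd l' := by
  induction h with
  | nil => rfl
  | cons _ _ ih => simp only [sqrtSignProd, ih]
  | swap x y l =>
    ext t
    simp only [sqrtSignProd, add_sub_right_comm t, add_right_comm t √y, sub_right_comm t √y]
    exact mul_mul_mul_comm ..
  | trans _ _ h h' => exact h.trans h'

theorem exists_sqrtSignProd_cons_eq {l : List ℕ} {f : ℤ[X]}
    (hf : ∀ t, sqrtSignProd l t = aeval t f) (g : ℕ) : ∃ u v : ℤ[X], C (g : ℤ) ∣ u - f ∧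
      ∀ t, sqrtSignProd (g :: l) t = aeval t u ^ 2 - g * aeval t v ^ 2 := by
  obtain ⟨u, v, hu, h⟩ := exists_aeval_add_eq f g
  have hg : √(g : ℝ) ^ 2 = g := Real.sq_sqrt g.cast_nonneg
  refine ⟨u, v, hu, fun t => ?_⟩
  rw [sqrtSignProd, hf, hf, sub_eq_add_neg, h t (√g) (by simp), h t (-√g) (by simp)]
  linear_combination -aeval t v ^ 2 * hg

theorem exists_polynomial_sqrtSignProd {N : ℕ} {l : List ℕ} (hl : ∀ g ∈ l, N ∣ g) : ∃ f : ℤ[X],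
    (∀ t, sqrtSignProd l t = aeval t f) ∧ C (N : ℤ) ∣ f - X ^ 2 ^ l.length := by
  induction l with
  | nil => exact ⟨X, by simp [sqrtSignProd], by simp⟩
  | cons g l ih =>
    rw [List.forall_mem_cons] at hl
    obtain ⟨f, hf, hfX⟩ := ih hl.2
    obtain ⟨u, v, hu, h⟩ := exists_sqrtSignProd_cons_eq hf g
    have hg : C (N : ℤ) ∣ C (g : ℤ) := C.map_dvd (Int.natCast_dvd_natCast.2 hl.1)
    refine ⟨u ^ 2 - C (g : ℤ) * v ^ 2, fun t => by simp [h], ?_⟩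
    rw [List.length_cons, pow_succ 2, pow_mul, sub_right_comm]
    refine dvd_sub (((dvd_add (hg.trans hu) hfX).trans ?_).trans (sub_dvd_pow_sub_pow _ _ 2))
      (hg.mul_right _)
    rw [sub_add_sub_cancel]

theorem exists_sqrtSignProd_eq_sq_sub {l : List ℕ} {g : ℕ} (hg : g ∈ l) : ∃ u v : ℤ[X], ∀ t,
    sqrtSignProd l t = aeval t u ^ 2 - g * aeval t v ^ 2 := by
  obtain ⟨f, hf, -⟩ := exists_polynomial_sqrtSignProd (l := l.erase g) fun _ _ => one_dvd _
  obtain ⟨u, v, -, h⟩ := exists_sqrtSignProd_cons_eq hf g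
  exact ⟨u, v, fun t => by rw [sqrtSignProd_perm (List.perm_cons_erase hg), h]⟩

theorem sqrtSignProd_pos {l : List ℕ} {t : ℝ} (ht : (l.map fun g : ℕ => √(g : ℝ)).sum < t) :
    0 < sqrtSignProd l t := by
  induction l generalizing t with
  | nil => simpa [sqrtSignProd] using ht
  | cons g l ih =>
    rw [List.map_cons, List.sum_cons] at ht
    have := Real.sqrt_nonneg (g : ℝ)
    exact mul_pos (ih (by linarith)) (ih (by linarith))

theorem sqrtSignProd_neg {l : List ℕ} {t : ℝ} (ht : t < (l.map fun g : ℕ => √(g : ℝ)).sum)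
    (hl : ∀ g ∈ l, (l.map fun g : ℕ => √(g : ℝ)).sum < t + 2 * √g) : sqrtSignProd l t < 0 := by
  induction l generalizing t with
  | nil => simpa [sqrtSignProd] using ht
  | cons g l ih =>
    rw [List.map_cons, List.sum_cons] at ht
    simp only [List.forall_mem_cons, List.map_cons, List.sum_cons] at hl
    exact mul_neg_of_pos_of_neg (sqrtSignProd_pos (by linarith))
      (ih (by linarith) fun g' hg' => by linarith [hl.2 g' hg'])

theorem exists_int_dvd_sub_one_lt_lt {N : ℕ} (hN : 0 < N) (σ : ℝ) :
    ∃ t : ℤ, (N : ℤ) ∣ t - 1 ∧ σ - N ≤ t ∧ t < σ := by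
  obtain ⟨m, ⟨h, h'⟩, -⟩ := existsUnique_add_zsmul_mem_Ico (Nat.cast_pos (α := ℝ).2 hN) 1 (σ - N)
  rw [sub_add_cancel] at h'
  exact ⟨1 + m * N, by simp, by simpa using h, by simpa using h'⟩

/-- Minus the norm of `t + √g₁ + ⋯ + √gₖ` is of the form `g s² - r²` for every `g = gᵢ`, because it
is a norm from `ℚ(√g)`. It is positive for `t` just below `√g₁ + ⋯ + √gₖ`, and the congruence holds
once `t ≡ 1` and all `gᵢ` are divisible by `N`. -/
theorem exists_forall_mul_sq_eq_add_sq {l : List ℕ} (hl : ∀ g ∈ l, 0 < g) {N : ℕ} (hN : 0 < N) :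
    ∃ c : ℕ, c ≠ 0 ∧ N ∣ c + 1 ∧ ∀ g ∈ l, ∃ r s : ℤ, s ≠ 0 ∧ (g : ℤ) * s ^ 2 = c + r ^ 2 := by
  let l' := l.map (N ^ 2 * ·)
  obtain ⟨f, hf, hfX⟩ := exists_polynomial_sqrtSignProd (N := N) (l := l')
    (List.forall_mem_map.2 fun g _ => (dvd_pow_self N two_ne_zero).mul_right g)
  obtain ⟨t, ht, hσt, htσ⟩ := exists_int_dvd_sub_one_lt_lt hN (l'.map fun g : ℕ => √(g : ℝ)).sum
  have hev (p : ℤ[X]) : aeval (t : ℝ) p = p.eval t := by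
    simpa using aeval_algebraMap_apply ℝ t p
  have hneg : f.eval t < 0 := by
    rw [← Int.cast_lt_zero (R := ℝ), ← hev, ← hf]
    refine sqrtSignProd_neg htσ (List.forall_mem_map.2 fun g hg => ?_)
    have hNg : (N : ℝ) ≤ √(N ^ 2 * g : ℕ) := Real.le_sqrt_of_sq_le (by
      exact_mod_cast Nat.le_mul_of_pos_right _ (hl g hg))
    have : (0 : ℝ) < N := Nat.cast_pos.2 hN
    linarith
  obtain ⟨c, hc⟩ := Int.eq_ofNat_of_zero_le (neg_nonneg.2 hneg.le)
  refine ⟨c, by lia, ?_, fun g hg => ?_⟩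
  · have hft : (N : ℤ) ∣ f.eval t - t ^ 2 ^ l'.length := by
      simpa using (evalRingHom t).map_dvd hfX
    rw [← Int.natCast_dvd_natCast, Nat.cast_succ, ← hc, ← dvd_neg, neg_add_rev, neg_neg,
      neg_add_eq_sub, ← sub_add_sub_cancel _ (t ^ 2 ^ l'.length)]
    exact dvd_add hft (ht.trans (sub_one_dvd_pow_sub_one t _))
  · obtain ⟨u, v, huv⟩ := exists_sqrtSignProd_eq_sq_sub
      (List.mem_map_of_mem (f := (N ^ 2 * ·)) hg)
    have h : f.eval t = u.eval t ^ 2 - (N ^ 2 * g : ℕ) * v.eval t ^ 2 := by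
      have := huv t
      rw [hf, hev, hev, hev] at this
      exact_mod_cast this
    push_cast at h
    refine ⟨u.eval t, N * v.eval t, fun hs => hneg.not_ge ?_, by linear_combination hc + h⟩
    rw [h, mul_right_comm, ← mul_pow, hs, zero_pow two_ne_zero, zero_mul, sub_zero]
    exact sq_nonneg _

theorem exists_forall_rat_mul_sq_eq_add_sq {ι : Type*} {E : Finset ι} {g : ι → ℚ}
    (hg : ∀ i ∈ E, 0 < g i) {N : ℕ} (hN : 0 < N) :
    ∃ c : ℕ, c ≠ 0 ∧ N ∣ c + 1 ∧ ∀ i ∈ E, ∃ r s : ℚ, s ≠ 0 ∧ g i * s ^ 2 = c + r ^ 2 := by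
  have hnum (i) (hi : i ∈ E) : 0 < (g i).num.natAbs :=
    Int.natAbs_pos.2 (Rat.num_pos.2 (hg i hi)).ne'
  obtain ⟨c, hc, hNc, h⟩ := exists_forall_mul_sq_eq_add_sq (N := N)
    (l := E.toList.map fun i => (g i).num.natAbs * (g i).den)
    (List.forall_mem_map.2 fun i hi => mul_pos (hnum i (Finset.mem_toList.1 hi)) (g i).den_pos) hN
  refine ⟨c, hc, hNc, fun i hi => ?_⟩
  obtain ⟨r, s, hs, hrs⟩ := h _ (List.mem_map_of_mem (Finset.mem_toList.2 hi))
  refine ⟨r, (g i).den * s, by simp [hs], ?_⟩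
  have hgi : (((g i).num.natAbs * (g i).den : ℕ) : ℚ) = g i * (g i).den ^ 2 := by
    rw [sq, ← mul_assoc, Rat.mul_den_eq_num, Nat.cast_mul, Nat.cast_natAbs,
      abs_of_pos (Rat.num_pos.2 (hg i hi))]
  rw [mul_pow, ← mul_assoc, ← hgi]
  generalize (g i).num.natAbs * (g i).den = γ at hrs
  exact_mod_cast hrs

end NormTrick

section Gluing

open GrothendieckWitt

variable {K ι : Type*} [Field K] [Fintype ι] [DecidableEq ι]

theorem isCongruent_fromBlocks_diagonal {g : ι → K} (hg : ∀ i, g i ≠ 0) (f : ι → K) :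
    IsCongruent (fromBlocks (diagonal g) 1 1 (diagonal f))
      (diagonal (Sum.elim g fun i => f i - (g i)⁻¹)) := by
  have hsub : diagonal (fun i => f i - (g i)⁻¹) = diagonal f - diagonal g⁻¹ :=
    (diagonal_sub _ _).symm
  have hgD : diagonal g * diagonal g⁻¹ = 1 := by simp [hg]
  have hDg : diagonal g⁻¹ * diagonal g = 1 := by simp [hg]
  have hDT : (diagonal g⁻¹)ᵀ = diagonal g⁻¹ := diagonal_transpose _
  generalize diagonal g⁻¹ = D at hsub hgD hDg hDT
  refine .of_transpose_mul_mul (P := fromBlocks 1 (-D) 0 1) (by simp) ?_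
  rw [← fromBlocks_diagonal, hsub]
  simp [fromBlocks_transpose, fromBlocks_multiply, hDT, hgD, hDg, neg_add_eq_sub]

theorem IsCongruent.exists_fromBlocks_smul {M : Matrix ι ι K} {g : ι → K} (hg : ∀ i, g i ≠ 0)
    (h : IsCongruent M (diagonal g)) (x : ι → K) : ∃ X : Matrix ι ι K, ∀ c : K,
      IsCongruent (Matrix.fromBlocks M 1 1 (c • X))
        (diagonal (Sum.elim g fun i => c * x i - (g i)⁻¹)) := by
  obtain ⟨P, Q, hPQ, hQP, hP⟩ := h
  have hPQ' : Qᵀ * Pᵀ = 1 := by rw [← transpose_mul, hPQ, transpose_one]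
  have hQP' : Pᵀ * Qᵀ = 1 := by rw [← transpose_mul, hQP, transpose_one]
  refine ⟨P * diagonal x * Pᵀ, fun c => .trans ?_ (isCongruent_fromBlocks_diagonal hg _)⟩
  refine ⟨Matrix.fromBlocks P 0 0 Qᵀ, Matrix.fromBlocks Q 0 0 Pᵀ, ?_, ?_, ?_⟩
  · simp [fromBlocks_multiply, hPQ, hPQ']
  · simp [fromBlocks_multiply, hQP, hQP']
  · have hx : Q * (P * diagonal x * Pᵀ) * Qᵀ = diagonal x := by
      rw [← Matrix.mul_assoc, ← Matrix.mul_assoc, hQP, Matrix.one_mul, Matrix.mul_assoc, hQP',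
        Matrix.mul_one]
    simp [fromBlocks_transpose, fromBlocks_multiply, hP, hQP, hQP', hx, ← diagonal_smul]

variable [NeZero (2 : K)]

theorem rankOne_add_rankOne_mul_inv {g c r s : K} (hg : g ≠ 0) (hc : c ≠ 0) (hs : s ≠ 0)
    (h : g * s ^ 2 = c + r ^ 2) : rankOne g + rankOne (c * g⁻¹) = rankOne 1 + rankOne c := by
  rw [rankOne_add_rankOne r 1 one_ne_zero hc (mul_ne_zero hg (pow_ne_zero 2 hs))
      (by linear_combination -h), rankOne_mul_sq g hs,
    show 1 * c * (g * s ^ 2) = c * g⁻¹ * (g * s) ^ 2 by field_simp,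
    rankOne_mul_sq _ (mul_ne_zero hg hs)]

theorem rankOne_add_rankOne_neg_inv {g : K} (hg : g ≠ 0) :
    rankOne g + rankOne (-g⁻¹) = hyperbolic K := by
  rw [show -g⁻¹ = -g * g⁻¹ ^ 2 by field_simp, rankOne_mul_sq _ (inv_ne_zero hg),
    rankOne_add_rankOne_neg hg]

theorem sum_rankOne_sumElim_add_nsmul_hyperbolic [CharZero K] {g : ι → K} (hg : ∀ i, g i ≠ 0)
    {c : ℕ} (hc : c ≠ 0) {E : Finset ι} {k : ℕ} (hk : E.card = 4 * k)
    (hE : ∀ i ∈ E, ∃ r s : K, s ≠ 0 ∧ g i * s ^ 2 = c + r ^ 2) :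
    ∑ j, rankOne (Sum.elim g (fun i => (c + 1) * (if i ∈ E then (g i)⁻¹ else 0) - (g i)⁻¹) j) +
      (4 * k) • hyperbolic K = Fintype.card ι • hyperbolic K + (8 * k) • rankOne (1 : K) := by
  have hc' : (c : K) ≠ 0 := Nat.cast_ne_zero.2 hc
  have hterm (i : ι) : rankOne (g i) +
      rankOne ((c + 1) * (if i ∈ E then (g i)⁻¹ else 0) - (g i)⁻¹) +
      (if i ∈ E then hyperbolic K else 0) =
      hyperbolic K + if i ∈ E then rankOne 1 + rankOne (c : K) else 0 := by
    split_ifs with hi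
    · obtain ⟨r, s, hs, h⟩ := hE i hi
      rw [add_one_mul, add_sub_cancel_right, rankOne_add_rankOne_mul_inv (hg i) hc' hs h, add_comm]
    · rw [mul_zero, zero_sub, rankOne_add_rankOne_neg_inv (hg i)]
  have hsum := Fintype.sum_congr _ _ hterm
  have hfour : (4 * k) • rankOne (c : K) = (4 * k) • rankOne 1 := by
    rw [mul_nsmul, mul_nsmul, ← one_mul (c : K), four_nsmul_rankOne_mul_natCast one_ne_zero hc]
  simp only [Finset.sum_add_distrib, Finset.sum_ite_mem, Finset.univ_inter, Finset.sum_const, hk,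
    Finset.card_univ, hfour] at hsum
  rw [Fintype.sum_sum_type]
  simp only [Sum.elim_inl, Sum.elim_inr, hsum, show 8 * k = 4 * k + 4 * k by ring, add_nsmul]

end Gluing

section Embedding

open GrothendieckWitt

theorem exists_forall_dvd_exists_map_eq_smul {ι κ : Type*} [Finite ι] [Finite κ]
    (X : Matrix ι κ ℚ) : ∃ N : ℕ, 0 < N ∧
    ∀ n : ℕ, N ∣ n → ∃ F : Matrix ι κ ℤ, F.map (Int.castRingHom ℚ) = (n : ℚ) • X ∧
      ∀ i j, 2 ∣ F i j := by
  obtain ⟨b, hb⟩ := IsLocalization.exist_integer_multiples_of_finite (nonZeroDivisors ℤ)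
    fun p : ι × κ => X p.1 p.2
  choose z hz using hb
  refine ⟨2 * (b : ℤ).natAbs, by simp, fun n hn => ?_⟩
  obtain ⟨q, hq⟩ : 2 * (b : ℤ) ∣ n := by
    rwa [← Int.natAbs_dvd_natAbs, Int.natAbs_mul]
  refine ⟨of fun i j => 2 * (q * z (i, j)), ?_, fun i j => dvd_mul_right _ _⟩
  ext i j
  have hzij : (z (i, j) : ℚ) = (b : ℤ) * X i j := by simpa using hz (i, j)
  have hn : (n : ℚ) = 2 * (b : ℤ) * q := by exact_mod_cast hq
  simp [hzij, hn]
  ring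

variable {ι κ : Type*} [Fintype ι] [DecidableEq ι] [Fintype κ] [DecidableEq κ]

theorem exists_even_isCongruent_fromBlocks {M : Matrix ι ι ℤ} {g : ι → ℚ} (hg : ∀ i, g i ≠ 0)
    (hM : IsCongruent (M.map (Int.castRingHom ℚ)) (diagonal g)) {k : ℕ}
    (hk : 4 * k ≤ {i | 0 < g i}.ncard) :
    ∃ (F : Matrix ι ι ℤ) (d : ι ⊕ ι → ℚ), (∀ i, 2 ∣ F i i) ∧ (∀ j, d j ≠ 0) ∧
      IsCongruent ((fromBlocks M 1 1 F).map (Int.castRingHom ℚ)) (diagonal d) ∧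
      ∑ j, rankOne (d j) + (4 * k) • hyperbolic ℚ =
        Fintype.card ι • hyperbolic ℚ + (8 * k) • rankOne 1 := by
  obtain ⟨E, hE, hEk⟩ : ∃ E : Finset ι, (∀ i ∈ E, 0 < g i) ∧ E.card = 4 * k := by
    rw [Set.ncard_eq_toFinset_card'] at hk
    obtain ⟨E, hE, hEk⟩ := Finset.exists_subset_card_eq hk
    exact ⟨E, fun i hi => by simpa using hE hi, hEk⟩
  obtain ⟨X, hX⟩ := hM.exists_fromBlocks_smul hg fun i => if i ∈ E then (g i)⁻¹ else 0
  obtain ⟨N, hN, hF⟩ := exists_forall_dvd_exists_map_eq_smul X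
  obtain ⟨c, hc, hNc, hcE⟩ := exists_forall_rat_mul_sq_eq_add_sq hE hN
  obtain ⟨F, hFX, hF⟩ := hF _ hNc
  have hc' : (c : ℚ) ≠ 0 := Nat.cast_ne_zero.2 hc
  refine ⟨F, _, fun i => hF i i, ?_, ?_,
    sum_rankOne_sumElim_add_nsmul_hyperbolic hg hc hEk hcE⟩
  · rintro (i | i)
    · exact hg i
    · by_cases hi : i ∈ E <;> simp [hi, hg, hc', add_mul]
  · have := hX (c + 1 : ℕ)
    rw [← hFX, Nat.cast_succ] at this
    rwa [fromBlocks_map, Matrix.map_one _ (map_zero _) (map_one _)]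

theorem isCongruent_hyperbolicPlane : IsCongruent
    ((!![0, 1; 1, 0] : Matrix (Fin 2) (Fin 2) ℤ).map (Int.castRingHom ℚ)) (diagonal ![1, -1]) := by
  refine .of_transpose_mul_mul (P := !![1, 1; 1 / 2, -1 / 2]) (by simp [det_fin_two]; norm_num) ?_
  ext i j
  fin_cases i <;> fin_cases j <;> simp [Matrix.mul_apply, Fin.sum_univ_two] <;> norm_num

theorem exists_transpose_mul_mul_eq_fromBlocks {G : Matrix ι ι ℤ} (hG : G.IsSymm)
    (hGeven : ∀ i, 2 ∣ G i i) (hGuni : IsUnit G.det) {M : Matrix κ κ ℤ}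
    (hMeven : ∀ i, 2 ∣ M i i) {g : κ → ℚ} (hg : ∀ i, g i ≠ 0)
    (hM : IsCongruent (M.map (Int.castRingHom ℚ)) (diagonal g)) {k : ℕ}
    (hk : 4 * k ≤ {i | 0 < g i}.ncard)
    (h : ofMatrix (G.map (Int.castRingHom ℚ)) + (4 * k) • hyperbolic ℚ =
      (Fintype.card κ + 1) • hyperbolic ℚ + (8 * k) • rankOne 1) :
    ∃ (Y : Matrix ι (κ ⊕ κ) ℤ) (F : Matrix κ κ ℤ), Yᵀ * G * Y = fromBlocks M 1 1 F := by
  obtain ⟨F, d, hF, hd, hMF, hsum⟩ := exists_even_isCongruent_fromBlocks hg hM hk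
  obtain ⟨a, ha, hGa⟩ := exists_isCongruent_diagonal_ne_zero (hG.map (Int.castRingHom ℚ))
    (det_map_intCast_ne_zero hGuni.ne_zero)
  let N : Matrix ((κ ⊕ κ) ⊕ Fin 2) ((κ ⊕ κ) ⊕ Fin 2) ℤ :=
    fromBlocks (fromBlocks M 1 1 F) 0 0 !![0, 1; 1, 0]
  have hN : IsCongruent (N.map (Int.castRingHom ℚ)) (diagonal (Sum.elim d ![1, -1])) := by
    rw [fromBlocks_map, Matrix.map_zero _ (map_zero _), Matrix.map_zero _ (map_zero _),
      ← fromBlocks_diagonal]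
    exact hMF.fromBlocks isCongruent_hyperbolicPlane
  have hGN : IsCongruent (diagonal a) (diagonal (Sum.elim d ![1, -1])) := by
    refine (sum_rankOne_eq_iff ha ?_).1 (add_right_cancel (b := (4 * k) • hyperbolic ℚ) ?_)
    · simpa [Fin.forall_fin_two] using hd
    · rw [← ofMatrix_eq_sum ha hGa, h, add_nsmul, one_nsmul, add_right_comm, ← hsum]
      simp [hyperbolic, add_right_comm]
  obtain ⟨Y, hY⟩ := exists_transpose_mul_mul_eq hG hGeven hGuni (N := N) (i₀ := .inr 0)
    (by simpa [N, Fin.forall_fin_two] using ⟨hMeven, hF⟩) (by simp [N])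
    (hGa.trans (hGN.trans hN.symm))
  exact ⟨Y.submatrix id .inl, F, congrArg toBlocks₁₁ hY⟩

end Embedding

section Primitive

variable {m n : ℕ} {M : Matrix (Fin m) (Fin m) ℤ} {G : Matrix (Fin n) (Fin n) ℤ}

theorem isPrimitiveLatticeEmbedding_of_transpose_mul_mul_eq_one {T S : Matrix (Fin n) (Fin m) ℤ}
    (hT : Tᵀ * G * T = M) (hS : Sᵀ * G * T = 1) : IsPrimitiveLatticeEmbedding M G T := by
  have hleft (x : Fin m → ℤ) : (Sᵀ * G) *ᵥ (T *ᵥ x) = x := by rw [mulVec_mulVec, hS, one_mulVec]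
  refine ⟨⟨Function.LeftInverse.injective hleft, fun x y => ?_⟩, ?_⟩
  · rw [← hT, ← mulVec_mulVec, ← mulVec_mulVec, dotProduct_mulVec x, vecMul_transpose]
  · rintro v k hk ⟨x, hx⟩
    refine ⟨(Sᵀ * G) *ᵥ v, smul_right_injective _ hk ?_⟩
    change k • T *ᵥ ((Sᵀ * G) *ᵥ v) = k • v
    rw [← mulVec_smul, ← mulVec_smul, ← hx, hleft]

theorem IsPrimitiveLatticeEmbedding.of_neg {T : Matrix (Fin n) (Fin m) ℤ}
    (h : IsPrimitiveLatticeEmbedding (-M) (-G) T) : IsPrimitiveLatticeEmbedding M G T :=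
  ⟨⟨h.1.1, fun x y => by simpa [neg_mulVec] using h.1.2 x y⟩, h.2⟩

end Primitive

section Existence

open GrothendieckWitt

variable {m n : ℕ} {M : Matrix (Fin m) (Fin m) ℤ} {G : Matrix (Fin n) (Fin n) ℤ}

theorem exists_isPrimitiveLatticeEmbedding_of_sumElim {a k : ℕ} (hMeven : ∀ i, 2 ∣ M i i)
    {g : Fin m → ℚ} (hg : ∀ i, g i ≠ 0)
    (hM : IsCongruent (M.map (Int.castRingHom ℚ)) (diagonal g))
    (hG : G.IsSymm) (hGeven : ∀ i, 2 ∣ G i i) (hGuni : IsUnit G.det)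
    (hk : 4 * k ≤ {i | 0 < g i}.ncard + a)
    (h : ofMatrix (G.map (Int.castRingHom ℚ)) + (4 * k) • hyperbolic ℚ =
      (m + a + 1) • hyperbolic ℚ + (8 * k) • rankOne 1) :
    ∃ T : Matrix (Fin n) (Fin m) ℤ, IsPrimitiveLatticeEmbedding M G T := by
  let M' : Matrix (Fin m ⊕ Fin a) (Fin m ⊕ Fin a) ℤ := fromBlocks M 0 0 (diagonal fun _ => 2)
  have hM' : IsCongruent (M'.map (Int.castRingHom ℚ))
      (diagonal (Sum.elim g fun _ : Fin a => 2)) := by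
    have := hM.fromBlocks (IsCongruent.refl (diagonal fun _ : Fin a => (2 : ℚ)))
    simpa [M', fromBlocks_map, diagonal_map] using this
  have hcard : {i | 0 < Sum.elim g (fun _ : Fin a => 2) i}.ncard = {i | 0 < g i}.ncard + a := by
    rw [← countP_map_univ (0 < ·), map_univ_sumElim, Multiset.countP_add, countP_map_univ,
      countP_map_univ]
    simp
  obtain ⟨Y, F, hY⟩ := exists_transpose_mul_mul_eq_fromBlocks hG hGeven hGuni (M := M')
    (by simpa [M'] using hMeven) (by simpa using hg) hM' (hk.trans_eq hcard.symm) (by simpa using h)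
  refine ⟨Y.submatrix id fun i => .inl (.inl i),
    isPrimitiveLatticeEmbedding_of_transpose_mul_mul_eq_one
      (S := Y.submatrix id fun i => .inr (.inl i)) ?_ ?_⟩
  · exact congrArg (fun A => A.toBlocks₁₁.toBlocks₁₁) hY
  · have := congrArg (fun A => A.toBlocks₂₁.toBlocks₁₁) hY
    simp only [toBlocks_fromBlocks₂₁] at this
    rw [← fromBlocks_one, toBlocks_fromBlocks₁₁] at this
    exact this

/-- Adding copies of `⟨2⟩` to `M` makes room for the definite part of `G`: when `G` has signature
`(l₋ + 8k, l₋)`, the sum of `M` and `l₋ + 4k - 1 - m` copies of `⟨2⟩` has rank `l₋ + 4k - 1`. -/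
theorem exists_isPrimitiveLatticeEmbedding_of_sigMinus_le (hM : M.IsSymm)
    (hMeven : ∀ i, 2 ∣ M i i) (hMdet : M.det ≠ 0) (hG : G.IsSymm) (hGeven : ∀ i, 2 ∣ G i i)
    (hGuni : IsUnit G.det) (hle : sigMinus G ≤ sigPlus G) (hlt : sigMinus M < sigMinus G)
    (hrank : 2 * m + 2 ≤ n) :
    ∃ T : Matrix (Fin n) (Fin m) ℤ, IsPrimitiveLatticeEmbedding M G T := by
  obtain ⟨g, hg, hMg⟩ := exists_isCongruent_diagonal_ne_zero (hM.map (Int.castRingHom ℚ))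
    (det_map_intCast_ne_zero hMdet)
  have hm := sigPlus_add_sigMinus hM hMdet
  have hn := sigPlus_add_sigMinus hG hGuni.ne_zero
  obtain ⟨k, hk⟩ : ∃ k, sigPlus G = sigMinus G + 8 * k := by
    obtain ⟨j, hj⟩ := eight_dvd_sigPlus_sub_sigMinus hG hGeven hGuni
    exact ⟨j.toNat, by omega⟩
  obtain ⟨a, ha⟩ : ∃ a, m + a + 1 = sigMinus G + 4 * k := ⟨sigMinus G + 4 * k - 1 - m, by omega⟩
  refine exists_isPrimitiveLatticeEmbedding_of_sumElim (a := a) (k := k) hMeven hg hMg hG hGeven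
    hGuni ?_ ?_
  · rw [← sigPlus_eq_ncard hM hMdet hg hMg]
    omega
  · rw [ofMatrix_eq_sigPlus_nsmul_add hG hGuni, hk, ha, hyperbolic]
    module

end Existence

/-- Existence part of Nikulin's embedding theorem (simplified form):
an even nondegenerate lattice of signature `(t₊,t₋)` embeds primitively into any
even unimodular lattice of signature `(l₊,l₋)` with `l₊ > t₊`, `l₋ > t₋`, and
`l₊ + l₋ − 2t₊ − 2t₋ ≥ 2`. -/
theorem nikulin_simplified_existence {m n : ℕ} (tp tm lp lm : ℕ)
    (M : Matrix (Fin m) (Fin m) ℤ) (G : Matrix (Fin n) (Fin n) ℤ)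
    (hMsymm : M.IsSymm) (hMeven : ∀ i, 2 ∣ M i i) (hMnd : M.det ≠ 0)
    (hMsp : sigPlus M = tp) (hMsm : sigMinus M = tm)
    (hGsymm : G.IsSymm) (hGeven : ∀ i, 2 ∣ G i i) (hGuni : IsUnit G.det)
    (hGsp : sigPlus G = lp) (hGsm : sigMinus G = lm)
    (h1 : tp < lp) (h2 : tm < lm)
    (h3 : 2 * tp + 2 * tm + 2 ≤ lp + lm) :
    ∃ T : Matrix (Fin n) (Fin m) ℤ, IsPrimitiveLatticeEmbedding M G T := by
  subst hMsp hMsm hGsp hGsm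
  have hrank : 2 * m + 2 ≤ n := by
    have := sigPlus_add_sigMinus hMsymm hMnd
    have := sigPlus_add_sigMinus hGsymm hGuni.ne_zero
    omega
  rcases le_total (sigMinus G) (sigPlus G) with hle | hle
  · exact exists_isPrimitiveLatticeEmbedding_of_sigMinus_le hMsymm hMeven hMnd hGsymm hGeven hGuni
      hle h2 hrank
  · rw [← sigPlus_neg hGsymm hGuni.ne_zero, ← sigMinus_neg hGsymm hGuni.ne_zero] at hle
    rw [← sigMinus_neg hMsymm hMnd, ← sigMinus_neg hGsymm hGuni.ne_zero] at h1
    obtain ⟨T, hT⟩ := exists_isPrimitiveLatticeEmbedding_of_sigMinus_le hMsymm.neg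
      (fun i => (hMeven i).neg_right) (by simpa [det_neg] using hMnd) hGsymm.neg
      (fun i => (hGeven i).neg_right) (by simpa [det_neg, isUnit_neg_one.pow n] using hGuni)
      hle h1 hrank
    exact ⟨T, hT.of_neg⟩
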